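/- Define V₁₁(τ) := −e^{−πiτ/16}·μ(τ/4 + 1/2, τ/2; τ) and E₁(z) := η(8z)³. Then for every τ ∈ ℍ: V₁₁(τ) − (2τ+1)^{−1/2}·V₁₁(τ/(2τ+1)) = −(i/8)·∫_{1/2}^{i∞} E₁(u/32)/√(−i(u+τ)) du, where the integral is taken along the vertical path u = 1/2 + it, t ∈ (0, ∞), i.e., it equals −(i/8)·i·∫₀^∞ E₁((1/2+it)/32)/√(−i(1/2+it+τ)) dt. (This is the transformation of Theorem 1.2(i) for (m,n) = (1,1) on ℍ, where ζ₄^{ℓ₁} = ζ₄² = −1, c₁ = 8, and E₁(2u/c₁²) = E₁(u/32).) -/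

import Mathlib

open Complex

/-- The Dedekind eta function `η(τ) = e^{πiτ/12} ∏_{n≥1} (1 - e^{2πinτ})`. -/
noncomputable def dedekindEta (τ : ℂ) : ℂ :=
  Complex.exp ((Real.pi : ℂ) * I * τ / 12) *
    ∏' n : ℕ, (1 - Complex.exp (2 * (Real.pi : ℂ) * I * ((n : ℂ) + 1) * τ))

/-- Zwegers' Jacobi theta function. -/
noncomputable def jacobiThetaZw (v τ : ℂ) : ℂ :=
  ∑' n : ℤ, Complex.exp (2 * (Real.pi : ℂ) * I * ((n : ℂ) + 1/2) * (v + 1/2)) *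
    Complex.exp ((Real.pi : ℂ) * I * τ * ((n : ℂ) + 1/2) ^ 2)

/-- Zwegers' μ-function. -/
noncomputable def muZw (u v τ : ℂ) : ℂ :=
  Complex.exp ((Real.pi : ℂ) * I * u) / jacobiThetaZw v τ *
    ∑' n : ℤ, (-1 : ℂ) ^ n * Complex.exp (2 * (Real.pi : ℂ) * I * (n : ℂ) * v) *
      Complex.exp ((Real.pi : ℂ) * I * τ * (n : ℂ) * ((n : ℂ) + 1)) /
      (1 - Complex.exp (2 * (Real.pi : ℂ) * I * u) * Complex.exp (2 * (Real.pi : ℂ) * I * (n : ℂ) * τ))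

/-- `V₁₁(τ) = −e^{−πiτ/16} μ(τ/4 + 1/2, τ/2; τ)`. -/
noncomputable def V11 (τ : ℂ) : ℂ :=
  -Complex.exp (-(Real.pi : ℂ) * I * τ / 16) * muZw (τ/4 + 1/2) (τ/2) τ

/-- `E₁(z) = η(8z)³`. -/
noncomputable def E1fun (z : ℂ) : ℂ := dedekindEta (8 * z) ^ 3


/-- Gaussian binomial -/
noncomputable def gbin (q : ℂ) : ℕ → ℕ → ℂ
  | _, 0 => 1
  | 0, _ + 1 => 0
  | M + 1, j + 1 => gbin q M j + q ^ (j + 1) * gbin q M (j + 1)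

/-- finite q-Pochhammer -/
noncomputable def qpoc (q : ℂ) (m : ℕ) : ℂ := ∏ k ∈ Finset.range m, (1 - q ^ (k + 1))

lemma qpoc_succ (q : ℂ) (m : ℕ) : qpoc q (m + 1) = qpoc q m * (1 - q ^ (m + 1)) := by
  simp [qpoc, Finset.prod_range_succ]

lemma gbin_zero_right (q : ℂ) (M : ℕ) : gbin q M 0 = 1 := by cases M <;> rfl

lemma gbin_eq_zero (q : ℂ) : ∀ (M j : ℕ), M < j → gbin q M j = 0
  | 0, 0, h => by omega
  | 0, j + 1, _ => rfl
  | M + 1, 0, h => by omega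
  | M + 1, j + 1, h => by
    rw [gbin, gbin_eq_zero q M j (by omega), gbin_eq_zero q M (j+1) (by omega)]; simp

lemma gbin_self (q : ℂ) : ∀ M : ℕ, gbin q M M = 1
  | 0 => rfl
  | M + 1 => by rw [gbin, gbin_self q M, gbin_eq_zero q M (M+1) (by omega)]; simp

lemma gbin_mul (q : ℂ) : ∀ (j k : ℕ), gbin q (j + k) j * (qpoc q j * qpoc q k) = qpoc q (j + k)
  | 0, k => by simp [gbin_zero_right, qpoc]
  | j + 1, 0 => by simp [gbin_self, qpoc]
  | j + 1, k + 1 => by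
    have h1 := gbin_mul q j (k + 1)
    have h2 := gbin_mul q (j + 1) k
    rw [show j + 1 + (k + 1) = (j + k + 1) + 1 by ring, gbin, qpoc_succ q (j + k + 1)]
    rw [show j + (k + 1) = j + k + 1 by ring] at h1
    rw [show j + 1 + k = j + k + 1 by ring] at h2
    rw [qpoc_succ q k] at h1 ⊢
    rw [qpoc_succ q j] at h2 ⊢
    linear_combination (1 - q^(j+1)) * h1 + q^(j+1) * (1 - q^(k+1)) * h2

lemma gbin_cauchy (q : ℂ) (M : ℕ) : ∀ x : ℂ, ∏ k ∈ Finset.range M, (1 + x * q ^ k) =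
    ∑ j ∈ Finset.range (M + 1), gbin q M j * q ^ (j.choose 2) * x ^ j := by
  induction M with
  | zero => intro x; simp [gbin]
  | succ M ih =>
    intro x
    rw [Finset.prod_range_succ']
    have : ∏ k ∈ Finset.range M, (1 + x * q ^ (k + 1)) = ∏ k ∈ Finset.range M, (1 + (x * q) * q ^ k) :=
      Finset.prod_congr rfl fun k _ => by ring
    rw [this, ih, Finset.sum_range_succ' _ (M+1)]
    have e : ∀ j, gbin q (M+1) (j+1) * q ^ ((j+1).choose 2) * x ^ (j+1) =
       gbin q M j * q ^ (j.choose 2) * (x*q)^j * x + gbin q M (j+1) * q ^ ((j+1).choose 2) * (x*q)^(j+1) := by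
      intro j
      have : (j+1).choose 2 = j.choose 2 + j := by
        rw [Nat.choose_succ_succ' j 1]; simp [add_comm]
      rw [gbin, this]; ring
    simp_rw [e, Finset.sum_add_distrib, ← Finset.sum_mul]
    rw [Finset.sum_range_succ (fun j => gbin q M (j+1) * q ^ ((j+1).choose 2) * (x*q)^(j+1)),
      gbin_eq_zero q M (M+1) (by omega)]
    conv_lhs => rw [mul_add, mul_one]
    rw [Finset.sum_range_succ' (fun j => gbin q M j * q ^ (j.choose 2) * (x*q)^j) M]
    simp [gbin_zero_right]
    ring

lemma norm_pow_lt {q : ℂ} (hq : ‖q‖ < 1) (n : ℕ) : ‖q ^ (n+1)‖ < 1 := by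
  rw [norm_pow]; exact pow_lt_one₀ (norm_nonneg _) hq (by omega)

lemma one_sub_qpow_ne {q : ℂ} (hq : ‖q‖ < 1) (n : ℕ) : 1 - q ^ (n+1) ≠ 0 := by
  intro h
  have := norm_pow_lt hq n
  rw [← sub_eq_zero.mp h] at this
  simp at this

lemma qpoc_ne {q : ℂ} (hq : ‖q‖ < 1) (n : ℕ) : qpoc q n ≠ 0 :=
  Finset.prod_ne_zero_iff.mpr fun k _ => one_sub_qpow_ne hq k

lemma qpoc_tendsto {q : ℂ} (hq : ‖q‖ < 1) :
    Filter.Tendsto (qpoc q) Filter.atTop (nhds (∏' n : ℕ, (1 - q ^ (n+1)))) :=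
  (ModularForm.multipliable_one_sub_pow hq).hasProd.tendsto_prod_nat

lemma qpoc_lim_ne {q : ℂ} (hq : ‖q‖ < 1) : ∏' n : ℕ, (1 - q ^ (n+1)) ≠ 0 := by
  have := tprod_one_add_ne_zero_of_summable (f := fun n : ℕ ↦ -q ^ (n+1)) ?_ ?_
  · simpa [sub_eq_add_neg] using this
  · intro i; simpa [sub_eq_add_neg] using one_sub_qpow_ne hq i
  · simpa using (summable_nat_add_iff 1).mpr (summable_geometric_of_lt_one (norm_nonneg _) hq)

lemma gbin_eq {q : ℂ} (hq : ‖q‖ < 1) (j k : ℕ) :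
    gbin q (j + k) j = qpoc q (j + k) * (qpoc q j)⁻¹ * (qpoc q k)⁻¹ := by
  rw [← gbin_mul]
  field_simp [qpoc_ne hq j, qpoc_ne hq k]

lemma gbin_bound {q : ℂ} (hq : ‖q‖ < 1) : ∃ B : ℝ, 0 ≤ B ∧ ∀ j k, ‖gbin q (j + k) j‖ ≤ B := by
  obtain ⟨B1, h1⟩ := (qpoc_tendsto hq).norm.bddAbove_range
  obtain ⟨B2, h2⟩ := ((qpoc_tendsto hq).inv₀ (qpoc_lim_ne hq)).norm.bddAbove_range
  have h1' : ∀ n, ‖qpoc q n‖ ≤ B1 := fun n => h1 ⟨n, rfl⟩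
  have h2' : ∀ n, ‖(qpoc q n)⁻¹‖ ≤ B2 := fun n => h2 ⟨n, rfl⟩
  have p1 := (norm_nonneg _).trans (h1' 0)
  have p2 := (norm_nonneg _).trans (h2' 0)
  refine ⟨B1 * B2 * B2, by positivity, fun j k => ?_⟩
  rw [gbin_eq hq, norm_mul, norm_mul]
  gcongr
  exacts [h1' _, h2' _, h2' _]

lemma gbin_tendsto {q : ℂ} (hq : ‖q‖ < 1) (j k : ℕ → ℕ) (hj : Filter.Tendsto j Filter.atTop Filter.atTop)
    (hk : Filter.Tendsto k Filter.atTop Filter.atTop) :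
    Filter.Tendsto (fun N => gbin q (j N + k N) (j N)) Filter.atTop
      (nhds ((∏' n : ℕ, (1 - q ^ (n+1)))⁻¹)) := by
  simp_rw [gbin_eq hq]
  have hl := qpoc_tendsto hq
  have hi := hl.inv₀ (qpoc_lim_ne hq)
  have := ((hl.comp (hj.atTop_add_atTop hk)).mul (hi.comp hj)).mul (hi.comp hk)
  rw [mul_inv_cancel₀ (qpoc_lim_ne hq), one_mul] at this
  exact this


lemma choose_two_q (j : ℕ) : ((j.choose 2 : ℕ) : ℚ) = j * (j - 1) / 2 := by
  rw [Nat.cast_choose_two]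

lemma prod_one_sub_inv (c : ℕ → ℂ) (hc : ∀ i, c i ≠ 0) (N : ℕ) :
    (∏ i ∈ Finset.range N, (1 - (c i)⁻¹)) * ∏ i ∈ Finset.range N, c i =
      (-1) ^ N * ∏ i ∈ Finset.range N, (1 - c i) := by
  rw [← Finset.prod_mul_distrib]
  have : (-1 : ℂ) ^ N = ∏ i ∈ Finset.range N, (-1 : ℂ) := by simp
  rw [this, ← Finset.prod_mul_distrib]
  refine Finset.prod_congr rfl fun i _ => ?_
  field_simp [hc i]
  ring

lemma prod_q_pow (q : ℂ) (N : ℕ) : ∏ i ∈ Finset.range N, q ^ (i + 1) = q ^ ((N+1).choose 2) := by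
  induction N with
  | zero => simp
  | succ N ih =>
    rw [Finset.prod_range_succ, ih, ← pow_add, Nat.choose_succ_succ' (N+1) 1]; simp [add_comm]

lemma prod_q_pow_odd (q : ℂ) (N : ℕ) : ∏ i ∈ Finset.range N, q ^ (2 * i + 1) = q ^ (N ^ 2) := by
  induction N with
  | zero => simp
  | succ N ih => rw [Finset.prod_range_succ, ih, ← pow_add]; ring_nf

lemma gbin_symm {q : ℂ} (hq : ‖q‖ < 1) (j k : ℕ) : gbin q (j + k) j = gbin q (j + k) k := by
  rw [gbin_eq hq j k, add_comm j k, gbin_eq hq k j]; ring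

lemma eta_finite {q : ℂ} (hq : ‖q‖ < 1) (h0 : q ≠ 0) (N : ℕ) :
    qpoc q N ^ 2 = ∑ n ∈ Finset.range (N + 1),
      (-1) ^ n * (2 * n + 1) * q ^ ((n+1).choose 2) * gbin q (2 * N + 1) (N - n) := by
  set r : ℂ := (q ^ N)⁻¹ with hr
  have hqN : q ^ N ≠ 0 := pow_ne_zero _ h0
  let g : ℂ → ℂ := fun z => (∏ k ∈ Finset.range N, (1 - z * r * q ^ k)) *
     ∏ k ∈ Finset.range N, (1 - z * q ^ (k + 1))
  have hg : Differentiable ℂ g := by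
    intro z
    refine DifferentiableAt.mul ?_ ?_
    · exact DifferentiableAt.fun_finsetProd fun i _ => by fun_prop
    · exact DifferentiableAt.fun_finsetProd fun i _ => by fun_prop
  have key : ∀ z : ℂ, (1 - z) * g z = ∑ j ∈ Finset.range (2 * N + 2),
      gbin q (2 * N + 1) j * q ^ (j.choose 2) * (-r) ^ j * z ^ j := by
    intro z
    have := gbin_cauchy q (2 * N + 1) (-(z * r))
    rw [show 2 * N + 1 = N + (N + 1) by ring, Finset.prod_range_add, Finset.prod_range_succ'] at this
    rw [show 2 * N + 2 = N + (N + 1) + 1 by ring, show 2 * N + 1 = N + (N + 1) by ring]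
    have e1 : ∀ k, 1 + -(z * r) * q ^ (N + (k + 1)) = 1 - z * q ^ (k + 1) := by
      intro k; rw [pow_add, hr]; field_simp; ring
    have e2 : 1 + -(z * r) * q ^ (N + 0) = 1 - z := by
      rw [hr]; field_simp; ring
    have e3 : ∀ j, (-(z * r)) ^ j = (-r) ^ j * z ^ j := by
      intro j; rw [← mul_pow]; ring
    have e4 : ∀ k, 1 + -(z * r) * q ^ k = 1 - z * r * q ^ k := by intro k; ring
    rw [e2, Finset.prod_congr rfl (fun k _ => e1 k), Finset.prod_congr rfl (fun k _ => e4 k),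
      Finset.sum_congr rfl (fun j _ => by rw [e3 j, ← mul_assoc])] at this
    rw [← this]
    dsimp only [g]
    ring
  have d1 : HasDerivAt (fun z => (1 - z) * g z) (-g 1) 1 := by
    have := ((hasDerivAt_const (1:ℂ) (1:ℂ)).sub (hasDerivAt_id (1:ℂ))).mul (hg 1).hasDerivAt
    refine this.congr_deriv ?_
    simp
  have d2 : HasDerivAt (fun z : ℂ => ∑ j ∈ Finset.range (2 * N + 2),
      gbin q (2 * N + 1) j * q ^ (j.choose 2) * (-r) ^ j * z ^ j)
      (∑ j ∈ Finset.range (2 * N + 2),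
      gbin q (2 * N + 1) j * q ^ (j.choose 2) * (-r) ^ j * j) 1 := by
    refine HasDerivAt.fun_sum fun j _ => ?_
    have := (hasDerivAt_pow j (1:ℂ)).const_mul (gbin q (2 * N + 1) j * q ^ (j.choose 2) * (-r) ^ j)
    simpa using this
  have e := d1.unique ((funext key : _ = _) ▸ d2)
  have g1 : g 1 * q ^ ((N+1).choose 2) = (-1) ^ N * qpoc q N ^ 2 := by
    simp only [g]
    have h1 := prod_one_sub_inv (fun i => q ^ (i+1)) (fun i => pow_ne_zero _ h0) N
    rw [prod_q_pow] at h1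
    rw [← Finset.prod_range_reflect]
    have : ∏ j ∈ Finset.range N, (1 - 1 * r * q ^ (N - 1 - j)) =
        ∏ i ∈ Finset.range N, (1 - (q ^ (i + 1))⁻¹) := by
      refine Finset.prod_congr rfl fun i hi => ?_
      have hi := Finset.mem_range.mp hi
      congr 1
      rw [hr, one_mul, ← div_eq_inv_mul, div_eq_iff hqN, ← div_eq_inv_mul, eq_div_iff (pow_ne_zero _ h0), ← pow_add]
      congr 1; omega
    rw [this, mul_right_comm, h1]
    simp [qpoc, sq, mul_assoc]
  have hs : (-1 : ℂ) ^ N * (-1) ^ N = 1 := by rw [← mul_pow]; simp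
  have : qpoc q N ^ 2 = - (-1) ^ N * q ^ ((N+1).choose 2) * ∑ j ∈ Finset.range (2 * N + 2),
      gbin q (2 * N + 1) j * q ^ (j.choose 2) * (-r) ^ j * j := by
    rw [← e]
    linear_combination (-(-1)^N) * g1 - qpoc q N ^ 2 * hs
  rw [this, show 2 * N + 2 = (N + 1) + (N + 1) by ring, Finset.sum_range_add, ← Finset.sum_range_reflect,
    ← Finset.sum_add_distrib, Finset.mul_sum]
  refine Finset.sum_congr rfl fun n hn => ?_
  have hn := Finset.mem_range.mp hn
  obtain ⟨m, rfl⟩ : ∃ m, N = m + n := ⟨N - n, by omega⟩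
  have s1 : m + n + 1 - 1 - n = m := by omega
  have s2 : m + n - n = m := by omega
  rw [s1, s2]
  have s3 : gbin q (2 * (m + n) + 1) (m + n + 1 + n) = gbin q (2 * (m + n) + 1) m := by
    have := gbin_symm hq m (m + n + 1 + n)
    rw [show m + (m + n + 1 + n) = 2 * (m + n) + 1 by ring] at this
    exact this.symm
  rw [s3]
  have n1 : m.choose 2 + (m + n + 1).choose 2 = (n+1).choose 2 + (m + n) * m := by
    have : ((m.choose 2 + (m + n + 1).choose 2 : ℕ) : ℚ) = ((n+1).choose 2 + (m + n) * m : ℕ) := by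
      push_cast [choose_two_q]; ring
    exact_mod_cast this
  have n2 : (m + n + 1 + n).choose 2 + (m + n + 1).choose 2 = (n+1).choose 2 + (m + n) * (m + n + 1 + n) := by
    have : (((m + n + 1 + n).choose 2 + (m + n + 1).choose 2 : ℕ) : ℚ) = ((n+1).choose 2 + (m + n) * (m + n + 1 + n) : ℕ) := by
      push_cast [choose_two_q]; ring
    exact_mod_cast this
  have r1 : q ^ (m.choose 2) * q ^ ((m + n + 1).choose 2) * (-r) ^ m = (-1) ^ m * q ^ ((n+1).choose 2) := by
    rw [← pow_add, n1, neg_pow, hr, inv_pow, ← pow_mul, pow_add]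
    field_simp
  have r2 : q ^ ((m + n + 1 + n).choose 2) * q ^ ((m + n + 1).choose 2) * (-r) ^ (m + n + 1 + n) = -(-1) ^ m * q ^ ((n+1).choose 2) := by
    rw [← pow_add, n2, neg_pow, hr, inv_pow, ← pow_mul, pow_add]
    have : (-1 : ℂ) ^ (m + n + 1 + n) = - (-1) ^ m := by
      rw [show m + n + 1 + n = m + 2 * n + 1 by ring, pow_add, pow_add, pow_mul]; simp
    rw [this]
    field_simp
  have hm : (-1 : ℂ) ^ m * (-1) ^ m = 1 := by rw [← mul_pow]; simp
  push_cast
  rw [pow_add (-1 : ℂ) m n]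
  linear_combination (- (-1)^m * (-1)^n * gbin q (2 * (m + n) + 1) m * m) * r1
    - (-1)^m * (-1)^n * gbin q (2 * (m + n) + 1) m * (m + n + 1 + n) * r2
    + ( (-1)^n * gbin q (2 * (m + n) + 1) m * q ^ ((n+1).choose 2) * (2 * n + 1)) * hm

lemma eta_cube_q {q : ℂ} (hq : ‖q‖ < 1) (h0 : q ≠ 0) :
    (∏' n : ℕ, (1 - q ^ (n+1))) ^ 3 =
      ∑' n : ℕ, (-1) ^ n * (2 * (n:ℂ) + 1) * q ^ ((n+1).choose 2) := by
  set a := ∏' n : ℕ, (1 - q ^ (n+1)) with ha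
  obtain ⟨B, hB0, hB⟩ := gbin_bound hq
  have t1 : Filter.Tendsto (fun N => ∑' n : ℕ, (if n ≤ N then (-1) ^ n * (2 * (n:ℂ) + 1) * q ^ ((n+1).choose 2) *
      gbin q (2 * N + 1) (N - n) else 0)) Filter.atTop
      (nhds (∑' n : ℕ, (-1) ^ n * (2 * (n:ℂ) + 1) * q ^ ((n+1).choose 2) * a⁻¹)) := by
    refine tendsto_tsum_of_dominated_convergence (bound := fun n : ℕ => (2 * (n:ℝ) + 1) * ‖q‖ ^ n * B) ?_ ?_ ?_
    · refine Summable.mul_right _ ?_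
      have h1 := summable_pow_mul_geometric_of_norm_lt_one (R := ℝ) 1 (r := ‖q‖) (by simpa using hq)
      have h2 := summable_geometric_of_lt_one (norm_nonneg q) hq
      have := (h1.mul_left 2).add h2
      refine this.congr fun n => ?_
      simp; ring
    · intro n
      have h1 : Filter.Tendsto (fun N => gbin q ((N - n) + (N + n + 1)) (N - n)) Filter.atTop (nhds a⁻¹) := by
        refine gbin_tendsto hq _ _ (Filter.tendsto_sub_atTop_nat n) ?_
        exact Filter.tendsto_atTop_mono (fun N => by simp only [id]; omega) Filter.tendsto_id
      refine (h1.const_mul ((-1) ^ n * (2 * (n:ℂ) + 1) * q ^ ((n+1).choose 2))).congr' ?_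
      filter_upwards [Filter.eventually_ge_atTop n] with N hN
      rw [if_pos hN, show N - n + (N + n + 1) = 2 * N + 1 by omega]
    · refine Filter.Eventually.of_forall fun N n => ?_
      split_ifs with h
      · have := hB (N - n) (N + n + 1)
        rw [show N - n + (N + n + 1) = 2 * N + 1 by omega] at this
        rw [norm_mul, norm_mul, norm_mul]
        have e1 : ‖(-1 : ℂ) ^ n‖ = 1 := by simp
        have e2 : ‖2 * (n:ℂ) + 1‖ = 2 * (n:ℝ) + 1 := by
          have : (2 * (n:ℂ) + 1) = ((2 * n + 1 : ℕ) : ℂ) := by push_cast; ring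
          rw [this, Complex.norm_natCast]; push_cast; ring
        rw [e1, e2, one_mul, norm_pow]
        have hpow : ‖q‖ ^ ((n+1).choose 2) ≤ ‖q‖ ^ n := by
          refine pow_le_pow_of_le_one (norm_nonneg _) hq.le ?_
          rw [Nat.choose_succ_succ' n 1]; simp
        exact mul_le_mul (mul_le_mul_of_nonneg_left hpow (by positivity)) this (norm_nonneg _) (by positivity)
      · simp; positivity
  have t2 : Filter.Tendsto (fun N => qpoc q N ^ 2) Filter.atTop (nhds (a ^ 2)) := (qpoc_tendsto hq).pow 2
  have e : (fun N => qpoc q N ^ 2) = (fun N => ∑' n : ℕ, (if n ≤ N then (-1) ^ n * (2 * (n:ℂ) + 1) * q ^ ((n+1).choose 2) *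
      gbin q (2 * N + 1) (N - n) else 0)) := by
    funext N
    rw [eta_finite hq h0, tsum_eq_sum (s := Finset.range (N + 1))]
    · refine Finset.sum_congr rfl fun n hn => ?_
      rw [if_pos (by have := Finset.mem_range.mp hn; omega)]
    · intro n hn
      rw [if_neg (by rw [Finset.mem_range] at hn; omega)]
  rw [e] at t2
  have := tendsto_nhds_unique t2 t1
  have ha0 : a ≠ 0 := qpoc_lim_ne hq
  rw [tsum_mul_right] at this
  rw [pow_succ, this]
  field_simp

lemma theta4_finite {p : ℂ} (hp : ‖p‖ < 1) (h0 : p ≠ 0) (N : ℕ) :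
    (∏ i ∈ Finset.range N, (1 - p ^ (2 * i + 1))) ^ 2 = ∑ j ∈ Finset.range (2 * N + 1),
      (-1) ^ (j + N) * p ^ (((j : ℤ) - N).natAbs ^ 2) * gbin (p ^ 2) (2 * N) j := by
  set x : ℂ := -(p * (p ^ (2 * N))⁻¹) with hx
  have hpN : p ^ (2 * N) ≠ 0 := pow_ne_zero _ h0
  have key := gbin_cauchy (p ^ 2) (2 * N) x
  rw [show ∏ k ∈ Finset.range (2 * N), (1 + x * (p ^ 2) ^ k) =
    (∏ k ∈ Finset.range N, (1 + x * (p ^ 2) ^ k)) * ∏ k ∈ Finset.range N, (1 + x * (p ^ 2) ^ (N + k)) by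
      rw [two_mul, Finset.prod_range_add], ← Finset.prod_range_reflect] at key
  have e1 : ∀ k, 1 + x * (p ^ 2) ^ (N + k) = 1 - p ^ (2 * k + 1) := by
    intro k; rw [hx, ← pow_mul, mul_add, pow_add, pow_add]; field_simp; ring
  have e2 : ∏ j ∈ Finset.range N, (1 + x * (p ^ 2) ^ (N - 1 - j)) = ∏ j ∈ Finset.range N, (1 - (p ^ (2 * j + 1))⁻¹) := by
    refine Finset.prod_congr rfl fun i hi => ?_
    have hi := Finset.mem_range.mp hi
    obtain ⟨m, rfl⟩ : ∃ m, N = m + i + 1 := ⟨N - i - 1, by omega⟩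
    rw [show m + i + 1 - 1 - i = m by omega, hx, ← pow_mul, sub_eq_add_neg]
    congr 1
    rw [show 2 * (m + i + 1) = 2 * m + (2 * i + 1) + 1 by ring, pow_succ, pow_add]
    field_simp
  rw [e2, Finset.prod_congr rfl (fun k _ => e1 k)] at key
  have h1 := prod_one_sub_inv (fun i => p ^ (2 * i + 1)) (fun i => pow_ne_zero _ h0) N
  rw [prod_q_pow_odd] at h1
  have hs : (-1 : ℂ) ^ N * (-1) ^ N = 1 := by rw [← mul_pow]; simp
  have : (∏ i ∈ Finset.range N, (1 - p ^ (2 * i + 1))) ^ 2 = (-1) ^ N * p ^ (N ^ 2) *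
      ∑ j ∈ Finset.range (2 * N + 1), gbin (p ^ 2) (2 * N) j * (p ^ 2) ^ j.choose 2 * x ^ j := by
    rw [← key]
    linear_combination (-(-1)^N * ∏ i ∈ Finset.range N, (1 - p ^ (2 * i + 1))) * h1 -
      (∏ i ∈ Finset.range N, (1 - p ^ (2 * i + 1))) ^ 2 * hs
  rw [this, Finset.mul_sum]
  refine Finset.sum_congr rfl fun j _ => ?_
  have n1 : N ^ 2 + 2 * j.choose 2 + j = ((j : ℤ) - N).natAbs ^ 2 + 2 * N * j := by
    have : ((N ^ 2 + 2 * j.choose 2 + j : ℕ) : ℚ) = ((((j : ℤ) - N).natAbs ^ 2 + 2 * N * j : ℕ) : ℤ) := by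
      push_cast [choose_two_q, sq_abs]; ring
    exact_mod_cast this
  have n2 : p ^ (N ^ 2) * (p ^ 2) ^ j.choose 2 * x ^ j = (-1) ^ j * p ^ (((j : ℤ) - N).natAbs ^ 2) := by
    rw [hx, neg_pow, mul_pow, inv_pow, ← pow_mul, ← pow_mul]
    field_simp
    rw [← pow_add, ← pow_add, ← pow_add, n1, add_comm]
  rw [pow_add]
  linear_combination (-1) ^ N * gbin (p ^ 2) (2 * N) j * n2

lemma oddprod_ne {p : ℂ} (hp : ‖p‖ < 1) : ∃ P : ℂ, P ≠ 0 ∧ Filter.Tendsto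
    (fun N => ∏ i ∈ Finset.range N, (1 - p ^ (2 * i + 1))) Filter.atTop (nhds P) := by
  have hs : Summable fun n : ℕ => ‖-p ^ (2 * n + 1)‖ := by
    simp only [norm_neg, norm_pow]
    refine (summable_geometric_of_lt_one (norm_nonneg p) hp).of_nonneg_of_le (fun n => by positivity) fun n => ?_
    exact pow_le_pow_of_le_one (norm_nonneg _) hp.le (by omega)
  refine ⟨∏' n : ℕ, (1 + -p ^ (2 * n + 1)), ?_, ?_⟩
  · refine tprod_one_add_ne_zero_of_summable (fun i => ?_) hs
    simpa [sub_eq_add_neg] using one_sub_qpow_ne hp (2 * i)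
  · simpa [sub_eq_add_neg] using (multipliable_one_add_of_summable hs).hasProd.tendsto_prod_nat

lemma theta4_ne {p : ℂ} (hp : ‖p‖ < 1) (h0 : p ≠ 0) :
    ∑' n : ℤ, (-1 : ℂ) ^ n.natAbs * p ^ (n.natAbs ^ 2) ≠ 0 := by
  have hq : ‖p ^ 2‖ < 1 := norm_pow_lt hp 1
  set a := ∏' n : ℕ, (1 - (p ^ 2) ^ (n+1)) with ha
  obtain ⟨P, hP, hPt⟩ := oddprod_ne hp
  obtain ⟨B, hB0, hB⟩ := gbin_bound hq
  have hsum : Summable fun n : ℤ => ‖p‖ ^ n.natAbs := by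
    refine Summable.of_nat_of_neg ?_ ?_ <;>
    simpa using (summable_geometric_of_lt_one (norm_nonneg p) hp)
  have t1 : Filter.Tendsto (fun N : ℕ => ∑' n : ℤ, (if n.natAbs ≤ N then (-1) ^ n.natAbs * p ^ (n.natAbs ^ 2) *
      gbin (p ^ 2) (2 * N) (n + N).toNat else 0)) Filter.atTop
      (nhds (∑' n : ℤ, (-1) ^ n.natAbs * p ^ (n.natAbs ^ 2) * a⁻¹)) := by
    refine tendsto_tsum_of_dominated_convergence (bound := fun n : ℤ => ‖p‖ ^ n.natAbs * B) (hsum.mul_right B) ?_ ?_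
    · intro n
      have h1 : Filter.Tendsto (fun N : ℕ => gbin (p ^ 2) ((n + N).toNat + (N - n).toNat) (n + N).toNat) Filter.atTop (nhds a⁻¹) := by
        refine gbin_tendsto hq _ _ ?_ ?_
        · refine Filter.tendsto_atTop_mono (f := fun N : ℕ => N - n.natAbs) (fun N => by omega) (Filter.tendsto_sub_atTop_nat _)
        · refine Filter.tendsto_atTop_mono (f := fun N : ℕ => N - n.natAbs) (fun N => by omega) (Filter.tendsto_sub_atTop_nat _)
      refine (h1.const_mul ((-1) ^ n.natAbs * p ^ (n.natAbs ^ 2))).congr' ?_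
      filter_upwards [Filter.eventually_ge_atTop n.natAbs] with N hN
      rw [if_pos hN, show (n + N).toNat + (N - n).toNat = 2 * N by omega]
    · refine Filter.Eventually.of_forall fun N n => ?_
      split_ifs with h
      · have := hB (n + N).toNat (N - n).toNat
        rw [show (n + N).toNat + (N - n).toNat = 2 * N by omega] at this
        rw [norm_mul, norm_mul]
        have e1 : ‖(-1 : ℂ) ^ n.natAbs‖ = 1 := by simp
        rw [e1, one_mul, norm_pow]
        have hpow : ‖p‖ ^ (n.natAbs ^ 2) ≤ ‖p‖ ^ n.natAbs := by
          refine pow_le_pow_of_le_one (norm_nonneg _) hp.le ?_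
          nlinarith [Nat.le_self_pow (n := 2) (by norm_num) n.natAbs]
        exact mul_le_mul hpow this (norm_nonneg _) (by positivity)
      · simp; positivity
  have t2 := hPt.pow 2
  have e : (fun N => (∏ i ∈ Finset.range N, (1 - p ^ (2 * i + 1))) ^ 2) = (fun N : ℕ => ∑' n : ℤ, (if n.natAbs ≤ N then (-1) ^ n.natAbs * p ^ (n.natAbs ^ 2) *
      gbin (p ^ 2) (2 * N) (n + N).toNat else 0)) := by
    funext N
    rw [theta4_finite hp h0, tsum_eq_sum (s := Finset.Icc (-(N : ℤ)) N)]
    · refine Finset.sum_bij' (fun j _ => (j : ℤ) - N) (fun n _ => (n + N).toNat) ?_ ?_ ?_ ?_ ?_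
      · intro j hj; simp at hj ⊢; omega
      · intro j hj; simp at hj ⊢; omega
      · intro j hj; simp
      · intro j hj; simp at hj ⊢; omega
      · intro j hj
        simp at hj
        rw [if_pos (by omega)]
        have : (-1 : ℂ) ^ (j + N) = (-1) ^ ((j : ℤ) - N).natAbs := by
          rw [neg_one_pow_eq_pow_mod_two, neg_one_pow_eq_pow_mod_two (n := ((j : ℤ) - N).natAbs)]
          congr 1; omega
        rw [this]; simp
    · intro n hn
      rw [if_neg (by simp at hn; omega)]
  rw [e] at t2
  have := tendsto_nhds_unique t2 t1
  rw [tsum_mul_right] at this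
  intro h
  rw [h, zero_mul] at this
  exact hP (by simpa using this)


lemma dedekindEta_eq (w : ℂ) : dedekindEta w = ModularForm.eta w := by
  rw [dedekindEta, ModularForm.eta]
  simp_rw [ModularForm.eta_q_eq_cexp, Function.Periodic.qParam]
  congr 2
  push_cast; ring

lemma eta_cube_series {w : ℂ} (hw : 0 < w.im) : dedekindEta w ^ 3 =
    ∑' k : ℕ, (-1) ^ k * (2 * (k:ℂ) + 1) * exp (Real.pi * I * w * (2 * k + 1) ^ 2 / 4) := by
  have hq : ‖exp (2 * Real.pi * I * w)‖ < 1 := by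
    rw [norm_exp, Real.exp_lt_one_iff]
    have : (2 * Real.pi * I * w).re = - (2 * Real.pi * w.im) := by simp
    rw [this]
    have := Real.pi_pos
    simp; positivity
  have h1 : ∏' n : ℕ, (1 - exp (2 * Real.pi * I * ((n : ℂ) + 1) * w)) = ∏' n : ℕ, (1 - exp (2 * Real.pi * I * w) ^ (n + 1)) := by
    refine tprod_congr fun n => ?_
    rw [← exp_nat_mul]; congr 2; push_cast; ring
  rw [dedekindEta, h1, mul_pow, eta_cube_q hq (exp_ne_zero _), ← tsum_mul_left]
  refine tsum_congr fun k => ?_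
  rw [← exp_nat_mul, ← exp_nat_mul, mul_left_comm, ← exp_add]
  congr 2
  have : (((k + 1).choose 2 : ℕ) : ℂ) = (k + 1) * k / 2 := by
    rw [Nat.cast_choose_two]; push_cast; ring
  rw [this]
  push_cast
  ring

lemma eta_add_one_cube (w : ℂ) : dedekindEta (w + 8) ^ 3 = dedekindEta w ^ 3 := by
  rw [dedekindEta, dedekindEta, mul_pow, mul_pow]
  congr 1
  · rw [← exp_nat_mul, ← exp_nat_mul, exp_eq_exp_iff_exists_int]
    refine ⟨1, ?_⟩
    push_cast; ring
  · congr 1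
    refine tprod_congr fun n => ?_
    congr 1
    rw [exp_eq_exp_iff_exists_int]
    refine ⟨8 * (n + 1), ?_⟩
    push_cast; ring

lemma eta_S {w : ℂ} (hw : 0 < w.im) :
    dedekindEta (-1 / w) = (I ^ (1/2 : ℂ))⁻¹ * (w ^ (1/2 : ℂ) * dedekindEta w) := by
  have := ModularForm.eta_comp_eq_csqrt_I_inv hw
  rw [dedekindEta_eq, dedekindEta_eq]
  simpa [Complex.sqrt] using this

lemma sq_half (w : ℂ) : (w ^ (1/2 : ℂ)) ^ 2 = w := by
  simp

lemma eq_of_sq_re {a b : ℂ} (h : a ^ 2 = b ^ 2) (ha : 0 ≤ a.re) (hb : 0 < b.re) : a = b := by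
  rcases sq_eq_sq_iff_eq_or_eq_neg.mp h with h | h
  · exact h
  · rw [h] at ha; simp at ha; linarith

lemma half_re_pos {w : ℂ} (hw : w ∈ slitPlane) : 0 < (w ^ (1/2 : ℂ)).re := by
  have h0 := slitPlane_ne_zero hw
  rw [cpow_def_of_ne_zero h0, exp_re]
  refine mul_pos (Real.exp_pos _) (Real.cos_pos_of_mem_Ioo ?_)
  have h1 : (log w * (1/2)).im = w.arg / 2 := by
    have : (1/2 : ℂ) = ((1/2 : ℝ) : ℂ) := by push_cast; ring
    rw [this, im_mul_ofReal, log_im]; ring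
  rw [h1]
  have := arg_le_pi w
  have h2 := neg_pi_lt_arg w
  have h3 := (mem_slitPlane_iff_arg.mp hw).1
  have h4 := lt_of_le_of_ne this h3
  constructor <;> linarith

lemma eta_mod {t : ℝ} (ht : 0 < t) : dedekindEta ((1/2 + I * t) / 4) ^ 3 =
    (exp (Real.pi * I / 4) / (Real.sqrt (2 * t) : ℝ)) ^ 3 * dedekindEta (-1/8 + I / (16 * t)) ^ 3 := by
  set w : ℂ := (1/2 + I * t) / 4 with hw
  set w2 : ℂ := -1/8 + I / (16 * t) with hw2
  set κ : ℂ := exp (Real.pi * I / 4) / (Real.sqrt (2 * t) : ℝ) with hκ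
  have ht' : (t : ℂ) ≠ 0 := by exact_mod_cast ht.ne'
  have hwre : w.re = 1/8 := by
    have : w = ((1/8 : ℝ) : ℂ) + ((t/4 : ℝ) : ℂ) * I := by rw [hw]; push_cast; ring
    rw [this]; simp
  have hwim : w.im = t/4 := by
    have : w = ((1/8 : ℝ) : ℂ) + ((t/4 : ℝ) : ℂ) * I := by rw [hw]; push_cast; ring
    rw [this]; simp
  have hw2e : w2 = ((-1/8 : ℝ) : ℂ) + ((1/(16 * t) : ℝ) : ℂ) * I := by rw [hw2]; push_cast; ring
  have hw2im : 0 < w2.im := by rw [hw2e]; simp; positivity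
  have hwim' : 0 < w.im := by rw [hwim]; positivity
  have hw0 : w ≠ 0 := by intro h; rw [h] at hwim'; simp at hwim'
  have hw20 : w2 ≠ 0 := by intro h; rw [h] at hw2im; simp at hw2im
  have hκ2 : κ ^ 2 = I / (2 * t) := by
    rw [hκ, div_pow, ← exp_nat_mul]
    have h1 : ((2:ℕ) * (Real.pi * I / 4) : ℂ) = Real.pi / 2 * I := by push_cast; ring
    rw [h1, exp_pi_div_two_mul_I]
    congr 1
    rw [← ofReal_pow, Real.sq_sqrt (by positivity)]; push_cast; ring
  have hk : κ ^ 2 * w = w2 := by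
    rw [hκ2, hw, hw2]; field_simp; ring_nf; simp; ring
  have hmul : -1 / w2 = -1 / w + 8 := by
    rw [div_add' _ _ _ hw0, div_eq_div_iff hw20 hw0, hw, hw2]; field_simp; ring_nf; simp
  have hs : w2 ^ (1/2 : ℂ) = κ * w ^ (1/2 : ℂ) := by
    refine eq_of_sq_re ?_ (half_re_pos (Or.inr hw2im.ne')).le ?_
    · rw [mul_pow, sq_half, sq_half, hk]
    · have hr := half_re_pos (w := w) (Or.inr hwim'.ne')
      set s := w ^ (1/2 : ℂ) with hsd
      have h2 : s ^ 2 = w := sq_half w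
      have h3 : (s ^ 2).re = 1/8 := by rw [h2, hwre]
      rw [sq, mul_re] at h3
      have h4 : s.im < s.re := by nlinarith
      have h5 : κ * s = ((Real.sqrt 2 / 2 / Real.sqrt (2 * t) : ℝ) : ℂ) * ((1 + I) * s) := by
        rw [hκ, show (Real.pi * I / 4 : ℂ) = ((Real.pi / 4 : ℝ) : ℂ) * I by push_cast; ring, exp_mul_I,
          ← ofReal_cos, ← ofReal_sin, Real.cos_pi_div_four, Real.sin_pi_div_four]
        push_cast; ring
      rw [h5, re_ofReal_mul]
      refine mul_pos (by positivity) ?_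
      simp [mul_re]; linarith
  have e1 := eta_S hwim'
  have e2 := eta_S hw2im
  have e3 := eta_add_one_cube (-1 / w)
  rw [← hmul, e1, e2, hs] at e3
  have hI : (I ^ (1/2 : ℂ))⁻¹ ≠ 0 := inv_ne_zero (by simp)
  have hws : w ^ (1/2 : ℂ) ≠ 0 := by simp [hw0]
  have h6 : ((I ^ (1/2 : ℂ))⁻¹ * w ^ (1/2 : ℂ)) ^ 3 ≠ 0 := pow_ne_zero _ (mul_ne_zero hI hws)
  refine mul_left_cancel₀ h6 ?_
  linear_combination -e3


/-- Gaussian tail -/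
noncomputable def gtail (x : ℝ) : ℝ := 1/2 - ∫ w in (0:ℝ)..x, Real.exp (-Real.pi * w ^ 2)

lemma gtail_deriv (x : ℝ) : HasDerivAt gtail (-Real.exp (-Real.pi * x ^ 2)) x := by
  have hc : Continuous fun w : ℝ => Real.exp (-Real.pi * w ^ 2) := by fun_prop
  have := intervalIntegral.integral_hasDerivAt_right (hc.intervalIntegrable 0 x)
    (hc.stronglyMeasurableAtFilter _ _) hc.continuousAt
  exact this.const_sub (1/2)

lemma gtail_top : Filter.Tendsto gtail Filter.atTop (nhds 0) := by
  have h := MeasureTheory.intervalIntegral_tendsto_integral_Ioi (f := fun w : ℝ => Real.exp (-Real.pi * w ^ 2)) 0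
    ((integrable_exp_neg_mul_sq Real.pi_pos).integrableOn) Filter.tendsto_id
  rw [integral_gaussian_Ioi, div_self Real.pi_ne_zero] at h
  have := h.const_sub (1/2)
  simp only [Real.sqrt_one, sub_self, id] at this
  exact this

lemma gtail_neg (x : ℝ) : gtail (-x) = 1 - gtail x := by
  have h := intervalIntegral.integral_comp_neg (a := 0) (b := x) (fun w : ℝ => Real.exp (-Real.pi * w ^ 2))
  simp only [neg_sq, neg_zero] at h
  rw [gtail, gtail, intervalIntegral.integral_symm, ← h]; ring

lemma gtail_bot : Filter.Tendsto gtail Filter.atBot (nhds 1) := by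
  have := (gtail_top.comp Filter.tendsto_neg_atBot_atTop).const_sub 1
  rw [sub_zero] at this
  refine this.congr fun x => ?_
  have := gtail_neg (-x)
  rw [neg_neg] at this
  simp [this]

lemma levy {n y : ℝ} (hn : 0 < n) (hy : 0 < y) :
    MeasureTheory.IntegrableOn (fun t : ℝ => n / Real.sqrt t ^ 3 * Real.exp (-Real.pi * n ^ 2 / t - Real.pi * t * y ^ 2)) (Set.Ioi 0) ∧
    ∫ t in Set.Ioi (0:ℝ), n / Real.sqrt t ^ 3 * Real.exp (-Real.pi * n ^ 2 / t - Real.pi * t * y ^ 2) =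
      Real.exp (-2 * Real.pi * n * y) := by
  let H : ℝ → ℝ := fun t => Real.exp (-2 * Real.pi * n * y) * gtail (n / Real.sqrt t - y * Real.sqrt t) +
    Real.exp (2 * Real.pi * n * y) * gtail (n / Real.sqrt t + y * Real.sqrt t)
  have s0 : Filter.Tendsto (fun t : ℝ => n / Real.sqrt t) (nhdsWithin 0 (Set.Ioi 0)) Filter.atTop := by
    have h1 : Filter.Tendsto Real.sqrt (nhdsWithin 0 (Set.Ioi 0)) (nhdsWithin 0 (Set.Ioi 0)) := by
      refine tendsto_nhdsWithin_iff.mpr ⟨?_, ?_⟩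
      · have := Real.continuous_sqrt.tendsto 0
        rw [Real.sqrt_zero] at this
        exact this.mono_left nhdsWithin_le_nhds
      · filter_upwards [self_mem_nhdsWithin] with t ht
        exact Real.sqrt_pos.mpr ht
    exact (tendsto_inv_nhdsGT_zero.comp h1).const_mul_atTop hn
  have s1 : Filter.Tendsto (fun t : ℝ => y * Real.sqrt t) (nhdsWithin 0 (Set.Ioi 0)) (nhds 0) := by
    have : ContinuousAt (fun t : ℝ => y * Real.sqrt t) 0 := by fun_prop
    have := this.tendsto
    simp at this
    exact this.mono_left nhdsWithin_le_nhds
  have r0 : Filter.Tendsto (fun t : ℝ => n / Real.sqrt t) Filter.atTop (nhds 0) :=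
    Filter.Tendsto.const_div_atTop Real.tendsto_sqrt_atTop n
  have r1 : Filter.Tendsto (fun t : ℝ => y * Real.sqrt t) Filter.atTop Filter.atTop :=
    Real.tendsto_sqrt_atTop.const_mul_atTop hy
  have H0 : Filter.Tendsto H (nhdsWithin 0 (Set.Ioi 0)) (nhds 0) := by
    have a := (gtail_top.comp (s0.atTop_add s1.neg)).const_mul (Real.exp (-2 * Real.pi * n * y))
    have b := (gtail_top.comp (s0.atTop_add s1)).const_mul (Real.exp (2 * Real.pi * n * y))
    have := a.add b
    simp only [mul_zero, add_zero] at this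
    exact this
  have H1 : Filter.Tendsto H Filter.atTop (nhds (Real.exp (-2 * Real.pi * n * y))) := by
    have a := (gtail_bot.comp (r0.add_atBot (Filter.tendsto_neg_atTop_atBot.comp r1))).const_mul (Real.exp (-2 * Real.pi * n * y))
    have b := (gtail_top.comp (r0.add_atTop r1)).const_mul (Real.exp (2 * Real.pi * n * y))
    have := a.add b
    simp only [mul_zero, add_zero, mul_one] at this
    exact this
  have Hd : ∀ t ∈ Set.Ioi (0:ℝ), HasDerivAt H (n / Real.sqrt t ^ 3 * Real.exp (-Real.pi * n ^ 2 / t - Real.pi * t * y ^ 2)) t := by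
    intro t ht
    have ht : 0 < t := ht
    have hs := Real.hasDerivAt_sqrt ht.ne'
    have hsp : 0 < Real.sqrt t := Real.sqrt_pos.mpr ht
    have hi := (hasDerivAt_const t n).div hs hsp.ne'
    have h1 := ((gtail_deriv _).comp t (hi.sub (hs.const_mul y))).const_mul (Real.exp (-2 * Real.pi * n * y))
    have h2 := ((gtail_deriv _).comp t (hi.add (hs.const_mul y))).const_mul (Real.exp (2 * Real.pi * n * y))
    refine (h1.add h2).congr_deriv ?_
    simp only [Pi.sub_apply, Pi.add_apply, Pi.div_apply]
    have hst : Real.sqrt t ^ 2 = t := Real.sq_sqrt ht.le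
    have e1 : Real.exp (-2 * Real.pi * n * y) * Real.exp (-Real.pi * (n / Real.sqrt t - y * Real.sqrt t) ^ 2) =
       Real.exp (-Real.pi * n ^ 2 / t - Real.pi * t * y ^ 2) := by
      rw [← Real.exp_add]; congr 1
      generalize Real.sqrt t = s at *
      subst hst; field_simp; ring
    have e2 : Real.exp (2 * Real.pi * n * y) * Real.exp (-Real.pi * (n / Real.sqrt t + y * Real.sqrt t) ^ 2) =
       Real.exp (-Real.pi * n ^ 2 / t - Real.pi * t * y ^ 2) := by
      rw [← Real.exp_add]; congr 1
      generalize Real.sqrt t = s at *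
      subst hst; field_simp; ring
    rw [← mul_assoc, ← mul_assoc, mul_neg, mul_neg, e1, e2]
    field_simp
    ring
  let g : ℝ → ℝ := Function.update H 0 0
  have gd : ∀ t ∈ Set.Ioi (0:ℝ), HasDerivAt g (n / Real.sqrt t ^ 3 * Real.exp (-Real.pi * n ^ 2 / t - Real.pi * t * y ^ 2)) t := by
    intro t ht
    refine (Hd t ht).congr_of_eventuallyEq ?_
    filter_upwards [Ioi_mem_nhds ht] with x hx
    exact Function.update_of_ne (ne_of_gt hx) _ _
  have g0 : ContinuousWithinAt g (Set.Ici 0) 0 := by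
    rw [continuousWithinAt_update_same]
    rw [show (Set.Ici (0:ℝ)) \ {0} = Set.Ioi 0 by ext x; simp [lt_iff_le_and_ne, eq_comm]]
    exact H0
  have g1 : Filter.Tendsto g Filter.atTop (nhds (Real.exp (-2 * Real.pi * n * y))) := by
    refine H1.congr' ?_
    filter_upwards [Filter.eventually_gt_atTop 0] with x hx
    exact (Function.update_of_ne (ne_of_gt hx) _ _).symm
  have gp : ∀ t ∈ Set.Ioi (0:ℝ), 0 ≤ n / Real.sqrt t ^ 3 * Real.exp (-Real.pi * n ^ 2 / t - Real.pi * t * y ^ 2) := by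
    intro t _; positivity
  refine ⟨MeasureTheory.integrableOn_Ioi_deriv_of_nonneg g0 gd gp g1, ?_⟩
  rw [MeasureTheory.integral_Ioi_of_hasDerivAt_of_nonneg g0 gd gp g1]
  simp [g]


/-- eta cube on the line -/
noncomputable def Th (t : ℝ) : ℂ := dedekindEta ((1/2 + I * t) / 4) ^ 3

/-- coefficients -/
noncomputable def cth (k : ℕ) : ℂ := (-1) ^ k * exp (-(Real.pi * I * (2 * k + 1) ^ 2 / 32))

/-- base function -/
noncomputable def rr (y : ℝ) : ℂ := exp (Real.pi * I / 16) * (Real.exp (Real.pi * y / 4) : ℝ) *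
  (1 - exp (Real.pi * I / 4) * (Real.exp (Real.pi * y / 4) : ℝ) ^ 4) / (1 + I * (Real.exp (Real.pi * y / 4) : ℝ) ^ 8)

lemma norm_cth (k : ℕ) : ‖cth k‖ = 1 := by
  rw [cth, norm_mul, norm_pow, norm_neg, norm_one, one_pow, one_mul]
  rw [show (-(Real.pi * I * (2 * (k:ℂ) + 1) ^ 2 / 32)) = ((-(Real.pi * (2 * k + 1) ^ 2 / 32) : ℝ) : ℂ) * I by push_cast; ring]
  exact norm_exp_ofReal_mul_I _

/-- constant -/
noncomputable def Cth : ℂ := 8 * exp (3 * Real.pi * I / 4) / (Real.sqrt 2 : ℝ) ^ 3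

lemma Th_levy {t : ℝ} (ht : 0 < t) : Th t = ∑' k : ℕ, Cth * cth k *
    (((2 * (k:ℝ) + 1) / 8 / Real.sqrt t ^ 3 * Real.exp (-Real.pi * ((2 * k + 1) / 8) ^ 2 / t) : ℝ) : ℂ) := by
  rw [Th, eta_mod ht, eta_cube_series, ← tsum_mul_left]
  · refine tsum_congr fun k => ?_
    rw [Cth, cth, Real.sqrt_mul (by norm_num), div_pow, ← exp_nat_mul]
    push_cast
    have ht' : (t : ℂ) ≠ 0 := by exact_mod_cast ht.ne'
    have h1 : (Real.pi * I * (-1 / 8 + I / (16 * t)) * (2 * (k:ℂ) + 1) ^ 2 / 4) =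
      -(Real.pi * I * (2 * (k:ℂ) + 1) ^ 2 / 32) + (-Real.pi * ((2 * k + 1) / 8) ^ 2 / t) := by
      field_simp; ring_nf; simp; ring
    rw [h1, exp_add, mul_pow, show (3 * (Real.pi * I / 4) : ℂ) = 3 * Real.pi * I / 4 by ring]
    ring
  · have : (-1/8 + I / (16 * t) : ℂ) = ((-1/8 : ℝ) : ℂ) + ((1/(16 * t) : ℝ) : ℂ) * I := by push_cast; ring
    rw [this]; simp; positivity

lemma norm_Cth : ‖Cth‖ = 8 / Real.sqrt 2 ^ 3 := by
  rw [Cth, norm_div, norm_mul, show (3 * Real.pi * I / 4 : ℂ) = ((3 * Real.pi / 4 : ℝ) : ℂ) * I by push_cast; ring,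
    norm_exp_ofReal_mul_I]
  simp [abs_of_nonneg]

lemma Th_series {t : ℝ} (ht : 0 < t) : Th t = 
    ∑' k : ℕ, (-1) ^ k * (2 * (k:ℂ) + 1) * exp (Real.pi * I * ((1/2 + I * t) / 4) * (2 * k + 1) ^ 2 / 4) := by
  rw [Th, eta_cube_series]
  have : ((1/2 + I * t)/4 : ℂ) = ((1/8 : ℝ) : ℂ) + ((t/4 : ℝ) : ℂ) * I := by push_cast; ring
  rw [this]; simp; positivity

lemma summable_lin {c : ℝ} (hc : 0 < c) : Summable fun k : ℕ => (2 * (k:ℝ) + 1) * Real.exp (-c * k) := by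
  have hq : Real.exp (-c) < 1 := by rw [Real.exp_lt_one_iff]; linarith
  have h1 := summable_pow_mul_geometric_of_norm_lt_one (R := ℝ) 1 (r := Real.exp (-c)) (by simpa using hc)
  have h2 := summable_geometric_of_lt_one (Real.exp_pos (-c)).le hq
  have := (h1.mul_left 2).add h2
  refine this.congr fun n => ?_
  rw [mul_comm (-c), Real.exp_nat_mul]; ring

lemma Th_bound : ∃ K : ℝ, 0 ≤ K ∧ ∀ t : ℝ, 0 < t → ‖Th t‖ ≤ K * Real.exp (-(Real.pi * t / 16)) := by
  have hpi := Real.pi_pos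
  have s1 := summable_lin (c := Real.pi / 4) (by positivity)
  have s2 := summable_lin (c := Real.pi / 16) (by positivity)
  set A := ∑' k : ℕ, (2 * (k:ℝ) + 1) * Real.exp (-(Real.pi / 4) * k) with hA
  set B := ∑' k : ℕ, (2 * (k:ℝ) + 1) * Real.exp (-(Real.pi / 16) * k) with hB
  have hA0 : 0 ≤ A := tsum_nonneg fun k => by positivity
  have hB0 : 0 ≤ B := tsum_nonneg fun k => by positivity
  have b1 : ∀ t : ℝ, 1 ≤ t → ‖Th t‖ ≤ A * Real.exp (-(Real.pi * t / 16)) := by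
    intro t ht
    rw [Th_series (by linarith)]
    refine tsum_of_norm_bounded (s1.hasSum.mul_right (Real.exp (-(Real.pi * t / 16)))) fun k => ?_
    have e2 : ‖2 * (k:ℂ) + 1‖ = 2 * (k:ℝ) + 1 := by
      have : (2 * (k:ℂ) + 1) = ((2 * k + 1 : ℕ) : ℂ) := by push_cast; ring
      rw [this, Complex.norm_natCast]; push_cast; ring
    rw [norm_mul, norm_mul, norm_pow, norm_neg, norm_one, one_pow, one_mul, e2, mul_assoc (2 * (k:ℝ) + 1), ← Real.exp_add, norm_exp]
    gcongr
    have : (Real.pi * I * ((1/2 + I * t) / 4) * (2 * (k:ℂ) + 1) ^ 2 / 4) =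
       ((-(Real.pi * t * (2 * k + 1) ^ 2 / 16) : ℝ) : ℂ) + ((Real.pi * (2 * k + 1) ^ 2 / 32 : ℝ) : ℂ) * I := by
      push_cast; ring_nf; simp; ring
    rw [this, add_re, ofReal_re, re_ofReal_mul, I_re, mul_zero, add_zero]
    have hk : (0:ℝ) ≤ k := by positivity
    have : Real.pi * (k:ℝ) ≤ Real.pi * (k * t) := by gcongr; nlinarith
    have : 0 ≤ Real.pi * t * k ^ 2 := by positivity
    nlinarith
  have b2 : ∀ t : ℝ, 0 < t → t ≤ 1 → ‖Th t‖ ≤ (8 / Real.sqrt 2 ^ 3 / 8 * (2 * (64 / Real.pi) ^ 2)) * B := by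
    intro t ht ht1
    rw [Th_levy ht]
    refine tsum_of_norm_bounded (s2.hasSum.mul_left _) fun k => ?_
    rw [norm_mul, norm_mul, norm_Cth, norm_cth, mul_one, norm_real, Real.norm_of_nonneg (by positivity)]
    have h1 : Real.exp (-Real.pi * ((2 * k + 1) / 8) ^ 2 / t) ≤ Real.exp (-(Real.pi / 64 / t)) * Real.exp (-(Real.pi / 16) * k) := by
      rw [← Real.exp_add]
      gcongr
      have hu : 1 ≤ 1 / t := by rw [le_div_iff₀ ht]; linarith
      have hk : (0:ℝ) ≤ k := by positivity
      have e : -Real.pi * ((2 * (k:ℝ) + 1) / 8) ^ 2 / t = -Real.pi * ((2 * k + 1) / 8) ^ 2 * (1/t) := by ring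
      have e' : -(Real.pi / 64 / t) = -(Real.pi / 64) * (1/t) := by ring
      rw [e, e']
      have : Real.pi * (k:ℝ) ≤ Real.pi * (k * (1/t)) := by gcongr; nlinarith
      have : 0 ≤ Real.pi * (1/t) * k ^ 2 := by positivity
      nlinarith
    have h2 : Real.exp (-(Real.pi / 64 / t)) / Real.sqrt t ^ 3 ≤ 2 * (64 / Real.pi) ^ 2 := by
      have hs : Real.sqrt t ^ 2 = t := Real.sq_sqrt ht.le
      have hsp : 0 < Real.sqrt t := Real.sqrt_pos.mpr ht
      have hs1 : Real.sqrt t ≤ 1 := Real.sqrt_le_one.mpr ht1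
      rw [Real.exp_neg, ← one_div, div_div, div_le_iff₀ (by positivity)]
      have h3 := Real.quadratic_le_exp_of_nonneg (x := Real.pi / 64 / t) (by positivity)
      have h4 : (Real.pi / 64 / t) ^ 2 / 2 ≤ Real.exp (Real.pi / 64 / t) := by
        have : 0 ≤ Real.pi / 64 / t := by positivity
        linarith
      have h5 : t ^ 2 ≤ Real.sqrt t ^ 3 := by
        nth_rewrite 1 [← hs]
        rw [← pow_mul]
        exact pow_le_pow_of_le_one hsp.le hs1 (by norm_num)
      calc (1:ℝ) = 2 * (64 / Real.pi) ^ 2 * ((Real.pi / 64 / t) ^ 2 / 2 * t ^ 2) := by field_simp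
        _ ≤ _ := by gcongr
    calc 8 / Real.sqrt 2 ^ 3 * ((2 * (k:ℝ) + 1) / 8 / Real.sqrt t ^ 3 * Real.exp (-Real.pi * ((2 * k + 1) / 8) ^ 2 / t))
        ≤ 8 / Real.sqrt 2 ^ 3 * ((2 * (k:ℝ) + 1) / 8 / Real.sqrt t ^ 3 * (Real.exp (-(Real.pi / 64 / t)) * Real.exp (-(Real.pi / 16) * k))) := by gcongr
      _ = 8 / Real.sqrt 2 ^ 3 / 8 * (Real.exp (-(Real.pi / 64 / t)) / Real.sqrt t ^ 3) * ((2 * (k:ℝ) + 1) * Real.exp (-(Real.pi / 16) * k)) := by ring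
      _ ≤ _ := by gcongr
  set B' := (8 / Real.sqrt 2 ^ 3 / 8 * (2 * (64 / Real.pi) ^ 2)) * B with hB'
  have hB'0 : 0 ≤ B' := by positivity
  refine ⟨A + B' * Real.exp (Real.pi / 16), by positivity, fun t ht => ?_⟩
  rw [add_mul]
  rcases le_total 1 t with h | h
  · exact (b1 t h).trans (le_add_of_nonneg_right (by positivity))
  · refine (b2 t ht h).trans ?_
    rw [mul_assoc B', ← Real.exp_add]
    have : 1 ≤ Real.exp (Real.pi / 16 + -(Real.pi * t / 16)) := by
      rw [Real.one_le_exp_iff]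
      nlinarith
    have h2 : 0 ≤ A * Real.exp (-(Real.pi * t / 16)) := by positivity
    nlinarith

lemma Th_cont : ContinuousOn Th (Set.Ioi 0) := by
  intro t ht
  refine ContinuousAt.continuousWithinAt ?_
  have h1 : ContinuousAt dedekindEta ((1/2 + I * t) / 4) := by
    rw [show dedekindEta = ModularForm.eta from funext dedekindEta_eq]
    refine (ModularForm.differentiableAt_eta_of_mem_upperHalfPlaneSet ?_).continuousAt
    have : ((1/2 + I * t)/4 : ℂ) = ((1/8 : ℝ) : ℂ) + ((t/4 : ℝ) : ℂ) * I := by push_cast; ring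
    rw [this]; simpa using ht
  have h2 : ContinuousAt (fun t : ℝ => ((1/2 + I * t) / 4 : ℂ)) t := by fun_prop
  exact (ContinuousAt.comp (f := fun t : ℝ => ((1/2 + I * t) / 4 : ℂ)) h1 h2).pow 3

lemma Th_integrable : MeasureTheory.IntegrableOn Th (Set.Ioi 0) := by
  obtain ⟨K, hK, hb⟩ := Th_bound
  have h1 : MeasureTheory.IntegrableOn (fun t : ℝ => K * Real.exp (-(Real.pi / 16) * t)) (Set.Ioi 0) :=
    (exp_neg_integrableOn_Ioi 0 (by positivity)).const_mul K
  refine MeasureTheory.Integrable.mono' h1 (Th_cont.aestronglyMeasurable measurableSet_Ioi) ?_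
  filter_upwards [MeasureTheory.ae_restrict_mem measurableSet_Ioi] with t ht
  refine (hb t ht).trans (le_of_eq ?_)
  congr 2; ring

lemma cth_add (k : ℕ) : cth (k + 8) = - cth k := by
  rw [cth, cth, pow_add]
  have : exp (-(Real.pi * I * (2 * ((k + 8 : ℕ) : ℂ) + 1) ^ 2 / 32)) = - exp (-(Real.pi * I * (2 * k + 1) ^ 2 / 32)) := by
    rw [← exp_add_pi_mul_I, exp_eq_exp_iff_exists_int]
    refine ⟨-(k + 5), ?_⟩
    push_cast; ring
  rw [this]; norm_num

lemma cth_sum {x : ℝ} (h0 : 0 < x) (h1 : x < 1) :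
    exp (3 * Real.pi * I / 4) * ∑' k : ℕ, cth k * (x:ℂ) ^ (2 * k + 1) =
    - exp (-(11 * Real.pi * I / 32)) *
     (exp (Real.pi * I / 16) * x * (1 - exp (Real.pi * I / 4) * x ^ 4) / (1 + I * x ^ 8) +
      exp (Real.pi * I / 16) * (x:ℂ)⁻¹ * (1 - exp (Real.pi * I / 4) * (x:ℂ)⁻¹ ^ 4) / (1 + I * (x:ℂ)⁻¹ ^ 8)) := by
  have hs : Summable fun k : ℕ => cth k * (x:ℂ) ^ (2 * k + 1) := by
    refine Summable.of_norm_bounded (summable_geometric_of_lt_one h0.le h1) fun k => ?_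
    rw [norm_mul, norm_cth, one_mul, norm_pow, norm_real, Real.norm_of_nonneg h0.le]
    exact pow_le_pow_of_le_one h0.le h1.le (by omega)
  have hx0 : (x:ℂ) ≠ 0 := by exact_mod_cast h0.ne'
  have key := hs.sum_add_tsum_nat_add 8
  have e : ∀ k, cth (k + 8) * (x:ℂ) ^ (2 * (k + 8) + 1) = - x ^ 16 * (cth k * (x:ℂ) ^ (2 * k + 1)) := by
    intro k; rw [cth_add]; ring
  rw [tsum_congr e, tsum_mul_left] at key
  set S := ∑' k : ℕ, cth k * (x:ℂ) ^ (2 * k + 1)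
  set ω := exp (Real.pi * I / 32) with hω
  have o : ∀ m : ℕ, exp (m * (Real.pi * I / 32)) = ω ^ m := fun m => by rw [exp_nat_mul]
  have o32 : ω ^ 32 = -1 := by
    rw [← o, ← exp_pi_mul_I]; congr 1; push_cast; ring
  have oI : ω ^ 16 = I := by
    rw [← o]; refine Eq.trans ?_ exp_pi_div_two_mul_I; congr 1; push_cast; ring
  have o1 : exp (Real.pi * I / 16) = ω ^ 2 := by rw [← o]; congr 1; push_cast; ring
  have o2 : exp (Real.pi * I / 4) = ω ^ 8 := by rw [← o]; congr 1; push_cast; ring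
  have o3 : exp (3 * Real.pi * I / 4) = ω ^ 24 := by rw [← o]; congr 1; push_cast; ring
  have o4 : - exp (-(11 * Real.pi * I / 32)) = ω ^ 21 := by
    rw [← o, ← exp_add_pi_mul_I]; congr 1; push_cast; ring
  have oc : ∀ k m l : ℕ, (2 * k + 1) ^ 2 + m = 64 * l → cth k = (-1) ^ k * ω ^ m := by
    intro k m l h
    rw [cth, ← o]
    congr 1
    rw [exp_eq_exp_iff_exists_int]
    refine ⟨-l, ?_⟩
    have h' : (2 * (k:ℂ) + 1) ^ 2 + m = 64 * l := by exact_mod_cast h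
    push_cast
    linear_combination (-(Real.pi * I / 32)) * h'
  rw [Finset.sum_range_succ, Finset.sum_range_succ, Finset.sum_range_succ, Finset.sum_range_succ,
    Finset.sum_range_succ, Finset.sum_range_succ, Finset.sum_range_succ, Finset.sum_range_one,
    oc 0 63 1 (by norm_num), oc 1 55 1 (by norm_num), oc 2 39 1 (by norm_num), oc 3 15 1 (by norm_num),
    oc 4 47 2 (by norm_num), oc 5 7 2 (by norm_num), oc 6 23 3 (by norm_num), oc 7 31 4 (by norm_num)] at key
  rw [o1, o2, o3, o4, ← oI]
  have d1 : 1 + ω ^ 16 * (x:ℂ) ^ 8 ≠ 0 := by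
    rw [oI]; intro h
    have := congrArg re h
    rw [mul_comm, ← ofReal_pow, add_re, re_ofReal_mul, I_re] at this
    simp at this
  have d2 : (x:ℂ) ^ 8 + ω ^ 16 ≠ 0 := by
    rw [oI]; intro h
    have := congrArg im h
    rw [← ofReal_pow, add_im, ofReal_im, I_im] at this
    simp at this
  have d3 : 1 + ω ^ 16 * (x:ℂ)⁻¹ ^ 8 ≠ 0 := by
    intro h; apply d2
    rw [inv_pow] at h
    field_simp at h
    simpa using h
  have R : ω ^ 2 * (x:ℂ)⁻¹ * (1 - ω ^ 8 * (x:ℂ)⁻¹ ^ 4) / (1 + ω ^ 16 * (x:ℂ)⁻¹ ^ 8) =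
     ω ^ 2 * x ^ 3 * (x ^ 4 - ω ^ 8) / (x ^ 8 + ω ^ 16) := by
    rw [div_eq_div_iff d3 d2]; field_simp
  rw [R, div_add_div _ _ d1 d2, mul_div_assoc', eq_div_iff (mul_ne_zero d1 d2)]
  have k1 : S * (1 + x ^ 16) = (-1) ^ 0 * ω ^ 63 * (x:ℂ) ^ (2 * 0 + 1) + (-1) ^ 1 * ω ^ 55 * (x:ℂ) ^ (2 * 1 + 1) +
                  (-1) ^ 2 * ω ^ 39 * (x:ℂ) ^ (2 * 2 + 1) +
                (-1) ^ 3 * ω ^ 15 * (x:ℂ) ^ (2 * 3 + 1) +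
              (-1) ^ 4 * ω ^ 47 * (x:ℂ) ^ (2 * 4 + 1) +
            (-1) ^ 5 * ω ^ 7 * (x:ℂ) ^ (2 * 5 + 1) +
          (-1) ^ 6 * ω ^ 23 * (x:ℂ) ^ (2 * 6 + 1) +
        (-1) ^ 7 * ω ^ 31 * (x:ℂ) ^ (2 * 7 + 1) := by linear_combination -key
  have k2 : (1 + ω ^ 16 * (x:ℂ) ^ 8) * (x ^ 8 + ω ^ 16) = ω ^ 16 * (1 + x ^ 16) := by
    linear_combination (x:ℂ) ^ 8 * o32
  rw [k2, show ω ^ 24 * S * (ω ^ 16 * (1 + (x:ℂ) ^ 16)) = ω ^ 40 * (S * (1 + x ^ 16)) by ring, k1]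
  have w64 : ∀ n, ω ^ (n + 32) = - ω ^ n := by intro n; rw [pow_add, o32]; ring
  ring_nf
  simp only [w64 71, w64 63, w64 55, w64 47, w64 39, w64 31, w64 23, w64 15, w64 7,
    show ω ^ 103 = ω ^ (71 + 32) from rfl, show ω ^ 95 = ω ^ (63 + 32) from rfl, 
    show ω ^ 87 = ω ^ (55 + 32) from rfl, show ω ^ 79 = ω ^ (47 + 32) from rfl,
    show ω ^ 71 = ω ^ (39 + 32) from rfl, show ω ^ 63 = ω ^ (31 + 32) from rfl,
    show ω ^ 55 = ω ^ (23 + 32) from rfl, show ω ^ 47 = ω ^ (15 + 32) from rfl,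
    show ω ^ 39 = ω ^ (7 + 32) from rfl]
  ring

lemma Th_laplace_pos {y : ℝ} (hy : 0 < y) :
    ∫ t in Set.Ioi (0:ℝ), Th t * Real.exp (-(Real.pi * t * y ^ 2)) =
      -(8 / (Real.sqrt 2 : ℝ) ^ 3) * exp (-(11 * Real.pi * I / 32)) * (rr y + rr (-y)) := by
  have hpi := Real.pi_pos
  let F : ℕ → ℝ → ℂ := fun k t => Cth * cth k * (((2 * (k:ℝ) + 1) / 8 / Real.sqrt t ^ 3 * Real.exp (-Real.pi * ((2 * k + 1) / 8) ^ 2 / t - Real.pi * t * y ^ 2) : ℝ) : ℂ)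
  set x := Real.exp (-(Real.pi * y / 4)) with hx
  have hx1 : x < 1 := by rw [hx, Real.exp_lt_one_iff, neg_lt_zero]; positivity
  have hx0 : 0 < x := Real.exp_pos _
  have hn : ∀ k : ℕ, (0:ℝ) < (2 * (k:ℝ) + 1) / 8 := fun k => by positivity
  have hex : ∀ k : ℕ, Real.exp (-2 * Real.pi * ((2 * (k:ℝ) + 1) / 8) * y) = x ^ (2 * k + 1) := by
    intro k; rw [hx, ← Real.exp_nat_mul]; congr 1; push_cast; ring
  have hFi : ∀ k, MeasureTheory.Integrable (F k) (MeasureTheory.volume.restrict (Set.Ioi 0)) := fun k =>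
    (MeasureTheory.Integrable.ofReal (levy (hn k) hy).1).const_mul _
  have hFn : ∀ k, ∫ t in Set.Ioi (0:ℝ), ‖F k t‖ = ‖Cth‖ * x ^ (2 * k + 1) := by
    intro k
    rw [← hex, ← (levy (hn k) hy).2, ← MeasureTheory.integral_const_mul]
    refine MeasureTheory.integral_congr_ae ?_
    filter_upwards with t
    simp only [F]
    rw [norm_mul, norm_mul, norm_cth, mul_one, norm_real, Real.norm_of_nonneg (by positivity)]
  have hsum : Summable fun k => ∫ t in Set.Ioi (0:ℝ), ‖F k t‖ := by
    simp_rw [hFn]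
    refine Summable.mul_left _ ?_
    refine Summable.of_nonneg_of_le (fun k => by positivity) (fun k => ?_) (summable_geometric_of_lt_one hx0.le hx1)
    exact pow_le_pow_of_le_one hx0.le hx1.le (by omega)
  have key := MeasureTheory.hasSum_integral_of_summable_integral_norm hFi hsum
  have e1 : ∫ t in Set.Ioi (0:ℝ), Th t * Real.exp (-(Real.pi * t * y ^ 2)) = ∫ t in Set.Ioi (0:ℝ), ∑' k, F k t := by
    refine MeasureTheory.setIntegral_congr_fun measurableSet_Ioi fun t ht => ?_
    rw [Th_levy ht, ← tsum_mul_right]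
    refine tsum_congr fun k => ?_
    simp only [F]
    rw [sub_eq_add_neg, Real.exp_add]; push_cast; ring
  have e2 : ∀ k, ∫ t in Set.Ioi (0:ℝ), F k t = Cth * (cth k * (x:ℂ) ^ (2 * k + 1)) := by
    intro k
    simp only [F]
    rw [MeasureTheory.integral_const_mul, integral_complex_ofReal, (levy (hn k) hy).2, hex]; push_cast; ring
  simp_rw [e2] at key
  rw [e1, ← key.tsum_eq, tsum_mul_left, Cth]
  have := cth_sum hx0 hx1
  have r1 : rr (-y) = exp (Real.pi * I / 16) * x * (1 - exp (Real.pi * I / 4) * x ^ 4) / (1 + I * x ^ 8) := by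
    rw [rr, show Real.pi * -y / 4 = -(Real.pi * y / 4) by ring]
  have r2 : rr y = exp (Real.pi * I / 16) * (x:ℂ)⁻¹ * (1 - exp (Real.pi * I / 4) * (x:ℂ)⁻¹ ^ 4) / (1 + I * (x:ℂ)⁻¹ ^ 8) := by
    rw [rr, ← ofReal_inv, hx, Real.exp_neg, inv_inv]
  rw [← r1, ← r2] at this
  linear_combination 8 / (Real.sqrt 2 : ℂ) ^ 3 * this

lemma Th_laplace {y : ℝ} (hy : y ≠ 0) :
    ∫ t in Set.Ioi (0:ℝ), Th t * Real.exp (-(Real.pi * t * y ^ 2)) =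
      -(8 / (Real.sqrt 2 : ℝ) ^ 3) * exp (-(11 * Real.pi * I / 32)) * (rr y + rr (-y)) := by
  rcases lt_or_gt_of_ne hy with h | h
  · have := Th_laplace_pos (y := -y) (by linarith)
    rw [neg_sq, neg_neg] at this
    rw [this, add_comm]
  · exact Th_laplace_pos h


lemma Th_fubini {σ : ℂ} (hσ : 0 < σ.im) :
    ∫ t in Set.Ioi (0:ℝ), Th t / ((t - I * σ) ^ (1/2 : ℂ)) =
     -(8 / (Real.sqrt 2 : ℝ) ^ 3) * exp (-(11 * Real.pi * I / 32)) *
      ∫ y : ℝ, exp (Real.pi * I * σ * y ^ 2) * (rr y + rr (-y)) := by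
  have hpi := Real.pi_pos
  let G : ℝ → ℝ → ℂ := fun t y => Th t * cexp (-(Real.pi * (t - I * σ)) * y ^ 2)
  have hb : ∀ t : ℝ, (Real.pi * (t - I * σ)).re = Real.pi * (t + σ.im) := by
    intro t; rw [re_ofReal_mul]; simp
  have h1 : ∀ t ∈ Set.Ioi (0:ℝ), Th t / ((t - I * σ) ^ (1/2 : ℂ)) = ∫ y : ℝ, G t y := by
    intro t ht
    have ht : 0 < t := ht
    simp only [G]
    rw [MeasureTheory.integral_const_mul, integral_gaussian_complex (by rw [hb]; positivity)]
    have h0 : (Real.pi : ℂ) ≠ 0 := by exact_mod_cast hpi.ne'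
    rw [← div_div, div_self h0, one_div (_ - _), inv_cpow]
    · rw [div_eq_mul_inv]
    · intro h
      rw [arg_eq_pi_iff] at h
      have := h.1
      simp at this
      linarith
  have h2 : ∀ y : ℝ, y ≠ 0 → ∫ t in Set.Ioi (0:ℝ), G t y = exp (Real.pi * I * σ * y ^ 2) *
      (-(8 / (Real.sqrt 2 : ℝ) ^ 3) * exp (-(11 * Real.pi * I / 32)) * (rr y + rr (-y))) := by
    intro y hy
    rw [← Th_laplace hy, ← MeasureTheory.integral_const_mul]
    refine MeasureTheory.integral_congr_ae ?_
    filter_upwards with t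
    simp only [G]
    rw [mul_left_comm, ofReal_exp, ← exp_add]
    congr 2; push_cast; ring
  have hG : MeasureTheory.Integrable (Function.uncurry G)
      ((MeasureTheory.volume.restrict (Set.Ioi 0)).prod MeasureTheory.volume) := by
    have hg := integrable_exp_neg_mul_sq (b := Real.pi * σ.im) (by positivity)
    have hi := MeasureTheory.Integrable.mul_prod (μ := MeasureTheory.volume.restrict (Set.Ioi (0:ℝ))) Th_integrable.norm hg
    refine hi.mono' ?_ ?_
    · refine (MeasureTheory.Integrable.aestronglyMeasurable Th_integrable).comp_fst.mul ?_
      refine Continuous.aestronglyMeasurable ?_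
      fun_prop
    · have : ∀ᵐ p : ℝ × ℝ ∂((MeasureTheory.volume.restrict (Set.Ioi (0:ℝ))).prod MeasureTheory.volume), p.1 ∈ Set.Ioi (0:ℝ) :=
        MeasureTheory.Measure.quasiMeasurePreserving_fst.ae (MeasureTheory.ae_restrict_mem measurableSet_Ioi)
      filter_upwards [this] with p hp
      have hp : 0 < p.1 := hp
      simp only [Function.uncurry, G]
      rw [norm_mul, norm_exp]
      gcongr
      rw [neg_mul, neg_re, ← ofReal_pow, re_mul_ofReal, hb]
      have : 0 ≤ Real.pi * p.1 * p.2 ^ 2 := by positivity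
      nlinarith
  rw [MeasureTheory.setIntegral_congr_fun measurableSet_Ioi h1, MeasureTheory.integral_integral_swap hG,
    ← MeasureTheory.integral_const_mul]
  refine MeasureTheory.integral_congr_ae ?_
  have : ∀ᵐ y : ℝ, y ≠ 0 := by
    simp [MeasureTheory.ae_iff]
  filter_upwards [this] with y hy
  rw [h2 y hy]; ring


/-- denominator -/
noncomputable def Dn (z : ℂ) : ℂ := 1 + I * exp (2 * Real.pi * z)

lemma Dn_real (y : ℝ) : Dn y = 1 + (Real.exp (2 * Real.pi * y) : ℝ) * I := by
  rw [Dn]; push_cast; ring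

lemma Dn_ge_one (y : ℝ) : 1 ≤ ‖Dn y‖ := by
  have := abs_re_le_norm (Dn y)
  rw [Dn_real, add_re, re_ofReal_mul, I_re] at this
  rw [Dn_real]
  simpa using this

lemma Dn_ge_exp (y : ℝ) : Real.exp (2 * Real.pi * y) ≤ ‖Dn y‖ := by
  have := abs_im_le_norm (Dn y)
  rw [Dn_real, add_im, im_ofReal_mul, I_im] at this
  rw [Dn_real]
  simpa using this

lemma Dn_ne (y : ℝ) : Dn y ≠ 0 := by
  intro h
  have := Dn_ge_one y
  rw [h] at this; simp at this
  linarith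

lemma Dn_add_I (z : ℂ) : Dn (z + I) = Dn z := by
  rw [Dn, Dn, mul_add, exp_add, exp_two_pi_mul_I, mul_one]

lemma Dn_cont : Continuous Dn := by unfold Dn; fun_prop

lemma Dn_diff : Differentiable ℂ Dn := by unfold Dn; fun_prop

lemma div_Dn_integrable {f : ℝ → ℂ} (hf : MeasureTheory.Integrable f) :
    MeasureTheory.Integrable fun y : ℝ => f y / Dn y := by
  refine hf.norm.mono' ?_ ?_
  · simp_rw [div_eq_mul_inv]
    refine hf.aestronglyMeasurable.mul ?_
    exact (Continuous.inv₀ (Dn_cont.comp continuous_ofReal) Dn_ne).aestronglyMeasurable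
  · filter_upwards with y
    rw [norm_div]
    exact div_le_self (norm_nonneg _) (Dn_ge_one y)

lemma exp_div_Dn_bound (y : ℝ) : ‖(Real.exp (Real.pi * y) : ℝ) / Dn y‖ ≤ Real.exp (-Real.pi * |y|) := by
  have h0 := Dn_ge_one y
  have h1 := Dn_ge_exp y
  rw [norm_div, norm_real, Real.norm_of_nonneg (Real.exp_pos _).le, div_le_iff₀ (by linarith)]
  rcases le_total 0 y with h | h
  · rw [abs_of_nonneg h]
    calc Real.exp (Real.pi * y) = Real.exp (-Real.pi * y) * Real.exp (2 * Real.pi * y) := by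
          rw [← Real.exp_add]; congr 1; ring
      _ ≤ _ := by gcongr
  · rw [abs_of_nonpos h]
    calc Real.exp (Real.pi * y) = Real.exp (-Real.pi * -y) * 1 := by
          rw [mul_one]; congr 1; ring
      _ ≤ _ := by gcongr

lemma exp_abs_integrable : MeasureTheory.Integrable fun y : ℝ => Real.exp (-Real.pi * |y|) := by
  rw [← MeasureTheory.integrableOn_univ, ← Set.Iic_union_Ioi (a := (0:ℝ))]
  refine MeasureTheory.IntegrableOn.union ?_ ?_
  · refine (integrableOn_exp_mul_Iic Real.pi_pos 0).congr_fun (fun y hy => ?_) measurableSet_Iic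
    have hy : y ≤ 0 := hy
    simp only [abs_of_nonpos hy]; congr 1; ring
  · refine (exp_neg_integrableOn_Ioi 0 Real.pi_pos).congr_fun (fun y hy => ?_) measurableSet_Ioi
    have hy : 0 < y := hy
    simp only [abs_of_pos hy]

lemma exp_div_Dn_integrable : MeasureTheory.Integrable fun y : ℝ => ((Real.exp (Real.pi * y) : ℝ) / Dn y : ℂ) := by
  refine exp_abs_integrable.mono' ?_ (Filter.Eventually.of_forall exp_div_Dn_bound)
  refine Continuous.aestronglyMeasurable ?_
  refine Continuous.div (by fun_prop) (Dn_cont.comp continuous_ofReal) Dn_ne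

lemma exp_div_Dn_eq (y : ℝ) : ((Real.exp (Real.pi * y) : ℝ) / Dn y : ℂ) =
   ((Real.exp (Real.pi * y) / (1 + Real.exp (4 * Real.pi * y)) : ℝ) : ℂ) -
   ((Real.exp (Real.pi * -y) / (1 + Real.exp (4 * Real.pi * -y)) : ℝ) : ℂ) * I := by
  have h1 : Real.exp (4 * Real.pi * y) = Real.exp (Real.pi * y) ^ 4 := by
    rw [← Real.exp_nat_mul]; congr 1; push_cast; ring
  have h2 : Real.exp (4 * Real.pi * -y) = (Real.exp (Real.pi * y) ^ 4)⁻¹ := by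
    rw [← Real.exp_nat_mul, ← Real.exp_neg]; congr 1; push_cast; ring
  have h3 : Real.exp (Real.pi * -y) = (Real.exp (Real.pi * y))⁻¹ := by
    rw [← Real.exp_neg]; congr 1; ring
  have h4 : Real.exp (2 * Real.pi * y) = Real.exp (Real.pi * y) ^ 2 := by
    rw [← Real.exp_nat_mul]; congr 1; push_cast; ring
  have hD := Dn_ne y
  rw [Dn_real] at hD ⊢
  rw [h1, h2, h3]
  rw [h4] at hD ⊢
  have hu : 0 < Real.exp (Real.pi * y) := Real.exp_pos _
  generalize Real.exp (Real.pi * y) = u at *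
  have e2 : (u)⁻¹ / (1 + (u ^ 4)⁻¹) = u ^ 3 / (1 + u ^ 4) := by field_simp; ring
  rw [e2, div_eq_iff hD]
  have h5 : (1 + (u:ℂ) ^ 4) ≠ 0 := by
    have : (0:ℝ) < 1 + u ^ 4 := by positivity
    exact_mod_cast this.ne'
  push_cast
  field_simp
  linear_combination (u:ℂ) ^ 5 * I_sq

lemma exp_div_Dn_integral : ∫ y : ℝ, ((Real.exp (Real.pi * y) : ℝ) / Dn y : ℂ) = (1 - I) / (2 * (Real.sqrt 2 : ℝ)) := by
  let j : ℝ → ℝ := fun y => Real.exp (Real.pi * y) / (1 + Real.exp (4 * Real.pi * y))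
  have hj : MeasureTheory.Integrable j := by
    have := exp_div_Dn_integrable.re
    refine this.congr ?_
    filter_upwards with y
    show ((Real.exp (Real.pi * y) : ℝ) / Dn y : ℂ).re = j y
    rw [exp_div_Dn_eq, sub_re, ofReal_re, re_ofReal_mul, I_re, mul_zero, sub_zero]
  have hjn : MeasureTheory.Integrable fun y => j (-y) := hj.comp_neg
  have s : ∫ y, j (-y) = ∫ y, j y := MeasureTheory.integral_neg_eq_self j _
  have hd : ∀ y : ℝ, HasDerivAt (fun y => (1 / (Real.pi * Real.sqrt 2)) * Real.arctan (Real.sqrt 2 * Real.sinh (Real.pi * y))) (j y + j (-y)) y := by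
    intro y
    have h1 : HasDerivAt (fun y : ℝ => Real.pi * y) Real.pi y := by
      simpa using (hasDerivAt_id y).const_mul Real.pi
    have h2 := ((h1.sinh.const_mul (Real.sqrt 2)).arctan).const_mul (1 / (Real.pi * Real.sqrt 2))
    refine h2.congr_deriv ?_
    simp only [j]
    rw [mul_pow, Real.sq_sqrt (by norm_num), Real.cosh_eq, Real.sinh_eq]
    have g1 : Real.exp (4 * Real.pi * y) = Real.exp (Real.pi * y) ^ 4 := by
      rw [← Real.exp_nat_mul]; congr 1; push_cast; ring
    have g2 : Real.exp (4 * Real.pi * -y) = (Real.exp (Real.pi * y) ^ 4)⁻¹ := by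
      rw [← Real.exp_nat_mul, ← Real.exp_neg]; congr 1; push_cast; ring
    have g3 : Real.exp (Real.pi * -y) = (Real.exp (Real.pi * y))⁻¹ := by
      rw [← Real.exp_neg]; congr 1; ring
    rw [g1, g2, g3, Real.exp_neg]
    have hu : 0 < Real.exp (Real.pi * y) := Real.exp_pos _
    generalize Real.exp (Real.pi * y) = u at *
    have e2 : (u)⁻¹ / (1 + (u ^ 4)⁻¹) = u ^ 3 / (1 + u ^ 4) := by field_simp; ring
    have e3 : 1 + 2 * ((u - u⁻¹) / 2) ^ 2 = (1 + u ^ 4) / (2 * u ^ 2) := by field_simp; ring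
    rw [e2, e3]
    field_simp
    ring
  have ht : Filter.Tendsto (fun y : ℝ => Real.sqrt 2 * Real.sinh (Real.pi * y)) Filter.atTop Filter.atTop :=
    (Real.sinhOrderIso.tendsto_atTop.comp (Filter.tendsto_id.const_mul_atTop Real.pi_pos)).const_mul_atTop (by positivity)
  have hb : Filter.Tendsto (fun y : ℝ => Real.sqrt 2 * Real.sinh (Real.pi * y)) Filter.atBot Filter.atBot :=
    (Real.sinhOrderIso.tendsto_atBot.comp (Filter.tendsto_id.const_mul_atBot Real.pi_pos)).const_mul_atBot (by positivity)
  have key := MeasureTheory.integral_of_hasDerivAt_of_tendsto hd (hj.add hjn)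
    (((Real.tendsto_arctan_atBot.mono_right nhdsWithin_le_nhds).comp hb).const_mul _)
    (((Real.tendsto_arctan_atTop.mono_right nhdsWithin_le_nhds).comp ht).const_mul _)
  rw [MeasureTheory.integral_add hj hjn, s] at key
  have hJ : ∫ y, j y = 1 / (2 * Real.sqrt 2) := by
    have hpi := Real.pi_pos
    have : (∫ y, j y) + ∫ y, j y = 1 / Real.sqrt 2 := by rw [key]; field_simp; ring
    have h2 : 1 / Real.sqrt 2 = 2 * (1 / (2 * Real.sqrt 2)) := by field_simp
    linarith
  have e : ∀ y : ℝ, ((Real.exp (Real.pi * y) : ℝ) / Dn y : ℂ) = (j y : ℂ) - (j (-y) : ℂ) * I := exp_div_Dn_eq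
  simp_rw [e]
  have hjc : MeasureTheory.Integrable (fun y : ℝ => (j y : ℂ)) := hj.ofReal
  have hjc2 : MeasureTheory.Integrable (fun y : ℝ => (j (-y) : ℂ)) := hjn.ofReal
  rw [MeasureTheory.integral_sub hjc (hjc2.mul_const I), MeasureTheory.integral_mul_const,
    integral_complex_ofReal, integral_complex_ofReal, s, hJ]
  push_cast
  ring


lemma exp_pi_half : exp (Real.pi * I / 2) = I := by
  have : (Real.pi * I / 2 : ℂ) = Real.pi / 2 * I := by ring
  rw [this, exp_pi_div_two_mul_I]

lemma Dn_c : Dn (I / 4) = 0 := by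
  rw [Dn, show (2 * Real.pi * (I / 4) : ℂ) = Real.pi * I / 2 by ring, exp_pi_half, I_mul_I]; ring

lemma Dn_zero {z : ℂ} (h0 : 0 ≤ z.im) (h1 : z.im ≤ 1) (hz : Dn z = 0) : z = I / 4 := by
  have h : exp (2 * Real.pi * z) = exp (Real.pi * I / 2) := by
    rw [exp_pi_half]; rw [Dn] at hz
    linear_combination (-I) * hz + exp (2 * Real.pi * z) * I_mul_I
  obtain ⟨n, hn⟩ := exp_eq_exp_iff_exists_int.1 h
  have hp : (Real.pi : ℂ) ≠ 0 := by exact_mod_cast Real.pi_ne_zero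
  have hz' : z = I / 4 + n * I := by
    have : (2 * Real.pi : ℂ) * z = (2 * Real.pi) * (I / 4 + n * I) := by rw [hn]; ring
    exact mul_left_cancel₀ (by simpa using hp) this
  have him : z.im = 1 / 4 + n := by rw [hz']; simp
  have : n = 0 := by
    rw [him] at h0 h1
    have a : (-1:ℝ) < n := by linarith
    have b : (n:ℝ) < 1 := by linarith
    have a' : -1 < n := by exact_mod_cast a
    have b' : n < 1 := by exact_mod_cast b
    omega
  rw [hz', this]; simp

lemma Dn_deriv_c : deriv Dn (I / 4) ≠ 0 := by
  have h1 : HasDerivAt (fun z : ℂ => 2 * Real.pi * z) (2 * Real.pi : ℂ) (I/4) := by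
    simpa using (hasDerivAt_id (I/4 : ℂ)).const_mul (2 * Real.pi : ℂ)
  have h := (h1.cexp.const_mul I).const_add 1
  have e : deriv Dn (I/4) = _ := h.deriv
  rw [e]
  have hp : (Real.pi : ℂ) ≠ 0 := by exact_mod_cast Real.pi_ne_zero
  simp [hp, exp_ne_zero]

lemma Dn_far (x y : ℝ) (hx : 1 ≤ |x|) :
    1 / 2 ≤ ‖Dn (x + y * I)‖ ∧ Real.exp (Real.pi * x) * Real.exp (Real.pi * |x|) / 2 ≤ ‖Dn (x + y * I)‖ := by
  have hn : ‖I * exp (2 * Real.pi * (x + y * I))‖ = Real.exp (2 * Real.pi * x) := by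
    rw [norm_mul, norm_I, one_mul, norm_exp]; congr 1; simp
  have hpi := Real.pi_gt_three
  have h1 : 1 - Real.exp (2 * Real.pi * x) ≤ ‖Dn (x + y * I)‖ := by
    have := norm_sub_le_norm_add (1:ℂ) (I * exp (2 * Real.pi * (x + y * I)))
    rw [hn, norm_one] at this; exact this
  have h2 : Real.exp (2 * Real.pi * x) - 1 ≤ ‖Dn (x + y * I)‖ := by
    have := norm_sub_le_norm_add (I * exp (2 * Real.pi * (x + y * I))) (1:ℂ)
    rw [hn, norm_one, add_comm] at this; exact this
  rcases le_total 0 x with h | h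
  · rw [abs_of_nonneg h] at hx ⊢
    have : 2 ≤ Real.exp (2 * Real.pi * x) := by
      have := Real.add_one_le_exp (2 * Real.pi * x)
      nlinarith
    rw [← Real.exp_add, show Real.pi * x + Real.pi * x = 2 * Real.pi * x by ring]
    constructor <;> linarith
  · rw [abs_of_nonpos h] at hx ⊢
    have : Real.exp (2 * Real.pi * x) ≤ 1 / 2 := by
      have h2 : 2 ≤ Real.exp (-(2 * Real.pi * x)) := by
        have := Real.add_one_le_exp (-(2 * Real.pi * x))
        nlinarith
      rw [Real.exp_neg] at h2
      have := inv_anti₀ (by norm_num) h2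
      rw [inv_inv] at this; linarith
    rw [← Real.exp_add, show Real.pi * x + Real.pi * -x = 0 by ring, Real.exp_zero]
    constructor <;> linarith

lemma kconst : 2 * exp (-(Real.pi * I / 4)) * ((1 - I) / (2 * (Real.sqrt 2 : ℝ))) = -I := by
  have : exp (-(Real.pi * I / 4)) = ((Real.sqrt 2 : ℝ) / 2 : ℂ) * (1 - I) := by
    rw [show -(Real.pi * I / 4) = ((-(Real.pi / 4) : ℝ) : ℂ) * I by push_cast; ring, exp_mul_I, ← ofReal_cos, ← ofReal_sin,
      Real.cos_neg, Real.sin_neg, Real.cos_pi_div_four, Real.sin_pi_div_four]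
    push_cast; ring
  have hs : ((Real.sqrt 2 : ℝ) : ℂ) ≠ 0 := by
    have : Real.sqrt 2 ≠ 0 := by positivity
    exact_mod_cast this
  rw [this]
  field_simp
  linear_combination I_sq

lemma shift_Dn {g : ℂ → ℂ} (hg : Differentiable ℂ g)
    (h0 : MeasureTheory.Integrable fun y : ℝ => g y) (h1 : MeasureTheory.Integrable fun y : ℝ => g (y + I))
    (b : ℝ → ℝ) (hb : ∀ x y : ℝ, 0 ≤ y → y ≤ 1 → ‖g (x + y * I)‖ ≤ b x)
    (hbt : Filter.Tendsto b Filter.atTop (nhds 0)) (hbt' : Filter.Tendsto (fun x => b (-x)) Filter.atTop (nhds 0)) :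
    (∫ y : ℝ, g y / Dn y) - ∫ y : ℝ, g (y + I) / Dn y = -I * g (I / 4) := by
  set c : ℂ := I / 4 with hc
  let k : ℂ → ℂ := fun z => exp (Real.pi * (z - I / 4))
  have hk : Differentiable ℂ k := by simp only [k]; fun_prop
  have kr : ∀ y : ℝ, k y = exp (-(Real.pi * I / 4)) * (Real.exp (Real.pi * y) : ℝ) := by
    intro y; simp only [k]; push_cast; rw [← exp_add]; congr 1; ring
  have kI : ∀ y : ℝ, k (y + I) = - k y := by
    intro y; simp only [k]
    rw [show Real.pi * ((y:ℂ) + I - I / 4) = Real.pi * (y - I/4) + Real.pi * I by ring, exp_add, exp_pi_mul_I]; ring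
  have kc : k c = 1 := by simp [k, hc]
  let N : ℂ → ℂ := fun z => g z - g c * k z
  have hN : Differentiable ℂ N := hg.sub (hk.const_mul _)
  have Nc : N c = 0 := by simp [N, kc]
  let F : ℂ → ℂ := fun z => dslope N c z / dslope Dn c z
  have Fne : ∀ z, z ≠ c → F z = N z / Dn z := by
    intro z hz
    have hz' : z - c ≠ 0 := sub_ne_zero.2 hz
    simp only [F]
    rw [dslope_of_ne _ hz, dslope_of_ne _ hz, slope_def_field, slope_def_field, Nc, hc, Dn_c, ← hc, sub_zero, sub_zero,
      div_div_div_cancel_right₀ hz']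
  have dne : ∀ z : ℂ, 0 ≤ z.im → z.im ≤ 1 → dslope Dn c z ≠ 0 := by
    intro z hz0 hz1
    by_cases hz : z = c
    · rw [hz, dslope_same]; exact Dn_deriv_c
    · rw [dslope_of_ne _ hz, slope_def_field, hc, Dn_c, ← hc, sub_zero]
      refine div_ne_zero (fun h => hz (Dn_zero hz0 hz1 h)) (sub_ne_zero.2 hz)
  have dN : Differentiable ℂ (dslope N c) := by
    rw [← differentiableOn_univ, Complex.differentiableOn_dslope Filter.univ_mem]; exact hN.differentiableOn
  have dD : Differentiable ℂ (dslope Dn c) := by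
    rw [← differentiableOn_univ, Complex.differentiableOn_dslope Filter.univ_mem]; exact Dn_diff.differentiableOn
  have rect : ∀ R : ℝ, (∫ x in (-R)..R, F x) - (∫ x in (-R)..R, F (x + I)) + I * (∫ y in (0:ℝ)..1, F (R + y * I)) -
      I * (∫ y in (0:ℝ)..1, F ((-R : ℝ) + y * I)) = 0 := by
    intro R
    have := Complex.integral_boundary_rect_eq_zero_of_differentiableOn F (-R : ℝ) (R + I) (by
      intro z hz
      have him : z.im ∈ Set.Icc (0:ℝ) 1 := by
        have := hz.2
        simpa using this
      exact ((dN z).div (dD z) (dne z him.1 him.2)).differentiableWithinAt)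
    simpa using this
  have icr : ∀ y : ℝ, (y : ℂ) ≠ c := by
    intro y h
    have := congrArg Complex.im h
    simp [hc] at this
  have icI : ∀ y : ℝ, (y + I : ℂ) ≠ c := by
    intro y h
    have := congrArg Complex.im h
    simp [hc] at this
  have F0 : ∀ y : ℝ, F y = g y / Dn y - g c * exp (-(Real.pi * I / 4)) * ((Real.exp (Real.pi * y) : ℝ) / Dn y) := by
    intro y; rw [Fne _ (icr y)]; simp only [N]; rw [kr]; ring
  have F1 : ∀ y : ℝ, F (y + I) = g (y + I) / Dn y + g c * exp (-(Real.pi * I / 4)) * ((Real.exp (Real.pi * y) : ℝ) / Dn y) := by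
    intro y; rw [Fne _ (icI y), Dn_add_I]; simp only [N]; rw [kI, kr]; ring
  have i0 := div_Dn_integrable h0
  have i1 := div_Dn_integrable h1
  have ik := exp_div_Dn_integrable.const_mul (g c * exp (-(Real.pi * I / 4)))
  have FI0 : MeasureTheory.Integrable fun y : ℝ => F y := by simp_rw [F0]; exact i0.sub ik
  have FI1 : MeasureTheory.Integrable fun y : ℝ => F (y + I) := by simp_rw [F1]; exact i1.add ik
  have L0 := MeasureTheory.intervalIntegral_tendsto_integral FI0 Filter.tendsto_neg_atTop_atBot Filter.tendsto_id
  have L1 := MeasureTheory.intervalIntegral_tendsto_integral FI1 Filter.tendsto_neg_atTop_atBot Filter.tendsto_id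
  have Fb : ∀ x y : ℝ, 1 ≤ |x| → 0 ≤ y → y ≤ 1 → ‖F (x + y * I)‖ ≤ 2 * b x + ‖g c‖ * (2 * Real.exp (-(Real.pi * |x|))) := by
    intro x y hx hy0 hy1
    have hne : (x + y * I : ℂ) ≠ c := by
      intro h
      have := congrArg Complex.re h
      simp [hc] at this
      rw [this] at hx; norm_num at hx
    rw [Fne _ hne]
    obtain ⟨d1, d2⟩ := Dn_far x y hx
    have dpos : 0 < ‖Dn (x + y * I)‖ := by linarith
    have hgb := hb x y hy0 hy1
    have hkn : ‖k (x + y * I)‖ = Real.exp (Real.pi * x) := by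
      simp only [k]; rw [norm_exp]; congr 1; simp
    rw [norm_div, div_le_iff₀ dpos]
    have e1 : ‖N (x + y * I)‖ ≤ b x + ‖g c‖ * Real.exp (Real.pi * x) := by
      simp only [N]
      refine (norm_sub_le _ _).trans ?_
      rw [norm_mul, hkn]; linarith
    refine e1.trans ?_
    have hb0 : 0 ≤ b x := (norm_nonneg _).trans hgb
    have e2 : b x ≤ 2 * b x * ‖Dn (x + y * I)‖ := by nlinarith
    have e3 : Real.exp (Real.pi * x) ≤ (2 * Real.exp (-(Real.pi * |x|))) * ‖Dn (x + y * I)‖ := by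
      calc Real.exp (Real.pi * x) = (2 * Real.exp (-(Real.pi * |x|))) * (Real.exp (Real.pi * x) * Real.exp (Real.pi * |x|) / 2) := by
            rw [Real.exp_neg]; field_simp
        _ ≤ _ := by gcongr
    have e4 := mul_le_mul_of_nonneg_left e3 (norm_nonneg (g c))
    linarith
  have et : Filter.Tendsto (fun x : ℝ => Real.exp (-(Real.pi * x))) Filter.atTop (nhds 0) :=
    Real.tendsto_exp_neg_atTop_nhds_zero.comp (Filter.tendsto_id.const_mul_atTop Real.pi_pos)
  have V1 : Filter.Tendsto (fun R : ℝ => ∫ y in (0:ℝ)..1, F (R + y * I)) Filter.atTop (nhds 0) := by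
    have lim : Filter.Tendsto (fun R : ℝ => 2 * b R + ‖g c‖ * (2 * Real.exp (-(Real.pi * R)))) Filter.atTop (nhds 0) := by
      simpa using (hbt.const_mul 2).add ((et.const_mul 2).const_mul ‖g c‖)
    refine squeeze_zero_norm' ?_ lim
    filter_upwards [Filter.eventually_ge_atTop 1] with R hR
    have := intervalIntegral.norm_integral_le_of_norm_le_const (a := 0) (b := 1) (f := fun y : ℝ => F (R + y * I))
      (C := 2 * b R + ‖g c‖ * (2 * Real.exp (-(Real.pi * R)))) (by
        intro y hy
        rw [Set.uIoc_of_le zero_le_one] at hy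
        have := Fb R y (by rw [abs_of_nonneg (by linarith)]; exact hR) hy.1.le hy.2
        rwa [abs_of_nonneg (by linarith)] at this)
    simpa using this
  have V2 : Filter.Tendsto (fun R : ℝ => ∫ y in (0:ℝ)..1, F ((-R : ℝ) + y * I)) Filter.atTop (nhds 0) := by
    have lim : Filter.Tendsto (fun R : ℝ => 2 * b (-R) + ‖g c‖ * (2 * Real.exp (-(Real.pi * R)))) Filter.atTop (nhds 0) := by
      simpa using (hbt'.const_mul 2).add ((et.const_mul 2).const_mul ‖g c‖)
    refine squeeze_zero_norm' ?_ lim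
    filter_upwards [Filter.eventually_ge_atTop 1] with R hR
    have := intervalIntegral.norm_integral_le_of_norm_le_const (a := 0) (b := 1) (f := fun y : ℝ => F ((-R : ℝ) + y * I))
      (C := 2 * b (-R) + ‖g c‖ * (2 * Real.exp (-(Real.pi * R)))) (by
        intro y hy
        rw [Set.uIoc_of_le zero_le_one] at hy
        have := Fb (-R) y (by rw [abs_neg, abs_of_nonneg (by linarith)]; exact hR) hy.1.le hy.2
        rwa [abs_neg, abs_of_nonneg (by linarith)] at this)
    simpa using this
  have lim := ((L0.sub L1).add (V1.const_mul I)).sub (V2.const_mul I)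
  have lim0 := tendsto_nhds_unique (lim.congr (fun R => rect R)) tendsto_const_nhds
  simp only [mul_zero, add_zero, sub_zero] at lim0
  simp_rw [F0, F1] at lim0
  rw [MeasureTheory.integral_sub i0 ik, MeasureTheory.integral_add i1 ik, MeasureTheory.integral_const_mul, exp_div_Dn_integral] at lim0
  linear_combination lim0 + g c * kconst


/-- Mordell-type integrand -/
noncomputable def gq (σ w y : ℂ) : ℂ := exp (Real.pi * I * σ * y ^ 2 + 2 * Real.pi * w * y)

/-- Mordell-type integral -/
noncomputable def I0 (σ w : ℂ) : ℂ := ∫ y : ℝ, gq σ w y / Dn y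

lemma gq_re {σ : ℂ} (hσ : 0 < σ.im) : (Real.pi * I * σ).re < 0 := by
  have : (Real.pi * I * σ).re = -(Real.pi * σ.im) := by simp
  rw [this]
  have := mul_pos Real.pi_pos hσ
  linarith

lemma gq_integrable {σ : ℂ} (hσ : 0 < σ.im) (w : ℂ) : MeasureTheory.Integrable fun y : ℝ => gq σ w y := by
  have := integrable_cexp_quadratic' (gq_re hσ) (2 * Real.pi * w) 0
  simpa [gq] using this

lemma gq_norm (σ w : ℂ) (y : ℝ) : ‖gq σ w y‖ = Real.exp (-(Real.pi * σ.im * y ^ 2) + 2 * Real.pi * w.re * y) := by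
  rw [gq, norm_exp]; congr 1
  rw [show Real.pi * I * σ * (y:ℂ) ^ 2 + 2 * Real.pi * w * y = ((Real.pi * y ^ 2 : ℝ):ℂ) * (I * σ) + ((2 * Real.pi * y : ℝ) : ℂ) * w by push_cast; ring]
  rw [add_re, re_ofReal_mul, re_ofReal_mul, I_mul_re]; ring

lemma I0_diff {σ : ℂ} (hσ : 0 < σ.im) : Differentiable ℂ (I0 σ) := by
  intro w0
  let C : ℝ := 2 * Real.pi * (|w0.re| + 1) + 1
  have hpi := Real.pi_pos
  have hbd : MeasureTheory.Integrable fun y : ℝ => 2 * Real.pi * (‖gq σ ((C / (2 * Real.pi) : ℝ)) y‖ + ‖gq σ ((-C / (2 * Real.pi) : ℝ)) y‖) :=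
    ((gq_integrable hσ _).norm.add (gq_integrable hσ _).norm).const_mul _
  have := hasDerivAt_integral_of_dominated_loc_of_deriv_le (μ := MeasureTheory.volume) (𝕜 := ℂ)
    (F := fun w (y : ℝ) => gq σ w y / Dn y) (F' := fun w (y : ℝ) => gq σ w y * (2 * Real.pi * y) / Dn y) (x₀ := w0)
    (s := Metric.ball w0 1) (bound := fun y : ℝ => 2 * Real.pi * (‖gq σ ((C / (2 * Real.pi) : ℝ)) y‖ + ‖gq σ ((-C / (2 * Real.pi) : ℝ)) y‖))
    (Metric.ball_mem_nhds _ one_pos)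
    (Filter.Eventually.of_forall fun w => (div_Dn_integrable (gq_integrable hσ w)).aestronglyMeasurable)
    (div_Dn_integrable (gq_integrable hσ w0))
    (by
      refine Continuous.aestronglyMeasurable ?_
      refine Continuous.div (by unfold gq; fun_prop) (Dn_cont.comp continuous_ofReal) Dn_ne)
    (by
      filter_upwards with y w hw
      rw [norm_div]
      refine (div_le_self (norm_nonneg _) (Dn_ge_one y)).trans ?_
      rw [norm_mul, gq_norm, gq_norm, gq_norm, ofReal_re, ofReal_re]
      have hn : ‖(2 * Real.pi * y : ℂ)‖ = 2 * Real.pi * |y| := by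
        rw [norm_mul, norm_mul, norm_real, norm_real, Real.norm_of_nonneg hpi.le]; simp
      rw [hn]
      have hwr : |w.re| ≤ |w0.re| + 1 := by
        have h1 : ‖w - w0‖ < 1 := by rwa [← dist_eq_norm]
        have h2 := abs_re_le_norm (w - w0)
        rw [sub_re] at h2
        have h3 := abs_sub_abs_le_abs_sub w.re w0.re
        linarith
      have e1 : |y| ≤ Real.exp |y| := by have := Real.add_one_le_exp |y|; linarith
      have e2 : 2 * Real.pi * w.re * y + |y| ≤ C * |y| := by
        have : w.re * y ≤ (|w0.re| + 1) * |y| := by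
          refine (le_abs_self _).trans ?_
          rw [abs_mul]; gcongr
        have := mul_le_mul_of_nonneg_left this (by positivity : 0 ≤ 2 * Real.pi)
        simp only [C]; linarith
      have e3 : Real.exp (-(Real.pi * σ.im * y ^ 2) + C * |y|) ≤
          Real.exp (-(Real.pi * σ.im * y ^ 2) + 2 * Real.pi * (C / (2 * Real.pi)) * y) +
          Real.exp (-(Real.pi * σ.im * y ^ 2) + 2 * Real.pi * (-C / (2 * Real.pi)) * y) := by
        have f1 : 2 * Real.pi * (C / (2 * Real.pi)) * y = C * y := by field_simp
        have f2 : 2 * Real.pi * (-C / (2 * Real.pi)) * y = C * (-y) := by field_simp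
        rw [f1, f2]
        rcases abs_cases y with h | h
        · rw [h.1]; have := Real.exp_pos (-(Real.pi * σ.im * y ^ 2) + C * -y); linarith
        · rw [h.1]; have := Real.exp_pos (-(Real.pi * σ.im * y ^ 2) + C * y); linarith
      calc Real.exp (-(Real.pi * σ.im * y ^ 2) + 2 * Real.pi * w.re * y) * (2 * Real.pi * |y|)
          ≤ Real.exp (-(Real.pi * σ.im * y ^ 2) + 2 * Real.pi * w.re * y) * (2 * Real.pi * Real.exp |y|) := by gcongr
        _ = 2 * Real.pi * Real.exp (-(Real.pi * σ.im * y ^ 2) + (2 * Real.pi * w.re * y + |y|)) := by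
            rw [← add_assoc, Real.exp_add _ |y|]; ring
        _ ≤ 2 * Real.pi * Real.exp (-(Real.pi * σ.im * y ^ 2) + C * |y|) := by gcongr
        _ ≤ _ := by gcongr)
    hbd
    (by
      filter_upwards with y w hw
      refine HasDerivAt.div_const ?_ _
      have h1 : HasDerivAt (fun w : ℂ => Real.pi * I * σ * (y:ℂ) ^ 2 + 2 * Real.pi * w * (y:ℂ)) (2 * Real.pi * (y:ℂ) : ℂ) w := by
        have := (((hasDerivAt_id w).const_mul (2 * Real.pi : ℂ)).mul_const (y:ℂ)).const_add (Real.pi * I * σ * (y:ℂ) ^ 2)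
        simpa using this
      exact h1.cexp)
  exact this.2.differentiableAt

lemma I0_E1 {σ : ℂ} (hσ : 0 < σ.im) (w : ℂ) :
    I0 σ w + I * I0 σ (w + 1) = (1 / (-I * σ)) ^ (1 / 2 : ℂ) * exp (Real.pi * I * w ^ 2 / σ) := by
  have h0 := div_Dn_integrable (gq_integrable hσ w)
  have h1 := (div_Dn_integrable (gq_integrable hσ (w + 1))).const_mul I
  rw [I0, I0, ← MeasureTheory.integral_const_mul, ← MeasureTheory.integral_add h0 h1]
  have e : ∀ y : ℝ, gq σ w y / Dn y + I * (gq σ (w + 1) y / Dn y) = exp (Real.pi * I * σ * (y:ℂ) ^ 2 + 2 * Real.pi * w * y + 0) := by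
    intro y
    have hD := Dn_ne y
    have : gq σ (w + 1) y = gq σ w y * exp (2 * Real.pi * y) := by
      rw [gq, gq, ← exp_add]; congr 1; ring
    rw [add_zero, this]
    change _ = gq σ w y
    field_simp
    rw [Dn]
  simp_rw [e]
  rw [integral_cexp_quadratic (gq_re hσ)]
  have hσ0 : σ ≠ 0 := by rintro rfl; simp at hσ
  have hp : (Real.pi : ℂ) ≠ 0 := by exact_mod_cast Real.pi_ne_zero
  congr 2
  · field_simp
  · field_simp
    linear_combination (-4 * Real.pi * w ^ 2) * I_sq

lemma exp_quad_tendsto {s C D : ℝ} (hs : 0 < s) :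
    Filter.Tendsto (fun x : ℝ => Real.exp (-(s * x ^ 2) + C * |x| + D)) Filter.atTop (nhds 0) := by
  refine Real.tendsto_exp_atBot.comp ?_
  refine Filter.tendsto_atBot_add_const_right _ _ ?_
  have h1 : Filter.Tendsto (fun x : ℝ => x * (C + -s * x)) Filter.atTop Filter.atBot := by
    refine Filter.tendsto_id.atTop_mul_atBot₀ ?_
    refine Filter.tendsto_atBot_add_const_left _ _ ?_
    exact Filter.tendsto_id.const_mul_atTop_of_neg (by linarith)
  refine h1.congr' ?_
  filter_upwards [Filter.eventually_ge_atTop 0] with x hx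
  rw [abs_of_nonneg hx]; ring

lemma I0_E2 {σ : ℂ} (hσ : 0 < σ.im) (w : ℂ) :
    I0 σ w - exp (2 * Real.pi * I * w - Real.pi * I * σ) * I0 σ (w - σ) =
      -I * exp (-(Real.pi * I * σ / 16) + Real.pi * I * w / 2) := by
  have hI : ∀ y : ℝ, gq σ w (y + I) = exp (2 * Real.pi * I * w - Real.pi * I * σ) * gq σ (w - σ) y := by
    intro y
    rw [gq, gq, ← exp_add]; congr 1
    linear_combination (2 * Real.pi * σ * y + Real.pi * I * σ) * I_sq
  let b : ℝ → ℝ := fun x => Real.exp (-(Real.pi * σ.im * x ^ 2) + 2 * Real.pi * (|σ.re| + |w.re|) * |x| + (Real.pi * σ.im + 2 * Real.pi * |w.im|))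
  have hpi := Real.pi_pos
  have key := shift_Dn (g := gq σ w) (by unfold gq; fun_prop) (gq_integrable hσ w)
    (by simp_rw [hI]; exact (gq_integrable hσ _).const_mul _) b
    (by
      intro x y hy0 hy1
      rw [gq, norm_exp]
      refine Real.exp_le_exp.2 ?_
      have : (Real.pi * I * σ * (x + y * I) ^ 2 + 2 * Real.pi * w * (x + y * I)).re =
         -(Real.pi * σ.im * x ^ 2) + 2 * Real.pi * (-(σ.re * x * y) + w.re * x) + (Real.pi * σ.im * y ^ 2 - 2 * Real.pi * w.im * y) := by
        simp [pow_two]; ring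
      rw [this]
      have a1 : -(σ.re * x * y) ≤ |σ.re| * |x| := by
        refine (neg_le_abs _).trans ?_
        rw [abs_mul, abs_mul, abs_of_nonneg hy0]
        exact mul_le_of_le_one_right (by positivity) hy1
      have a2 : w.re * x ≤ |w.re| * |x| := by rw [← abs_mul]; exact le_abs_self _
      have a3 : y ^ 2 ≤ 1 := by nlinarith
      have a4 : -(w.im * y) ≤ |w.im| := by
        refine (neg_le_abs _).trans ?_
        rw [abs_mul, abs_of_nonneg hy0]
        exact mul_le_of_le_one_right (by positivity) hy1
      have b1 : 2 * Real.pi * (-(σ.re * x * y) + w.re * x) ≤ 2 * Real.pi * (|σ.re| + |w.re|) * |x| := by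
        have := mul_le_mul_of_nonneg_left (add_le_add a1 a2) (by positivity : (0:ℝ) ≤ 2 * Real.pi)
        linarith
      have b2 : Real.pi * σ.im * y ^ 2 ≤ Real.pi * σ.im := mul_le_of_le_one_right (by positivity) a3
      have b3 := mul_le_mul_of_nonneg_left a4 (by positivity : (0:ℝ) ≤ 2 * Real.pi)
      linarith)
    (by simp only [b]; exact exp_quad_tendsto (mul_pos hpi hσ))
    (by
      simp only [b, neg_sq, abs_neg]
      exact exp_quad_tendsto (mul_pos hpi hσ))
  simp_rw [hI, mul_div_assoc] at key
  rw [MeasureTheory.integral_const_mul] at key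
  rw [I0, I0, key]
  congr 1
  rw [gq]; congr 1
  linear_combination (Real.pi * I * σ / 16 + 0) * I_sq


/-- exp of pi i x -/
noncomputable def ee (x : ℂ) : ℂ := exp (Real.pi * I * x)

lemma ee_add (x y : ℂ) : ee (x + y) = ee x * ee y := by
  rw [ee, ee, ee, ← exp_add]; congr 1; ring
lemma ee_zero : ee 0 = 1 := by rw [ee, mul_zero, exp_zero]
lemma ee_ne (x : ℂ) : ee x ≠ 0 := exp_ne_zero _
lemma ee_one : ee 1 = -1 := by rw [ee, mul_one, exp_pi_mul_I]
lemma ee_half : ee (1 / 2) = I := by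
  have := exp_pi_half
  rw [ee, show (Real.pi * I * (1 / 2) : ℂ) = Real.pi * I / 2 by ring, this]
lemma ee_two : ee 2 = 1 := by
  rw [show (2:ℂ) = 1 + 1 by norm_num, ee_add, ee_one]; norm_num
lemma ee_neg (x : ℂ) : ee (-x) = (ee x)⁻¹ := by
  rw [ee, ee, ← exp_neg]; congr 1; ring
lemma ee_diff : Differentiable ℂ ee := by unfold ee; fun_prop
lemma ee_two_int (n : ℤ) : ee (2 * n) = 1 := by
  rw [ee, show (Real.pi * I * (2 * n) : ℂ) = n * (2 * Real.pi * I) by ring, exp_int_mul_two_pi_mul_I]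
lemma ee_add_one (x : ℂ) : ee (x + 1) = - ee x := by rw [ee_add, ee_one]; ring
lemma ee_add_two (x : ℂ) : ee (x + 2) = ee x := by rw [ee_add, ee_two]; ring
lemma ee_add_half (x : ℂ) : ee (x + 1 / 2) = I * ee x := by rw [ee_add, ee_half]; ring

/-- theta term -/
noncomputable def ft (τ : ℂ) (n : ℤ) (v : ℂ) : ℂ := jacobiTheta₂_term n (v + τ / 2 + 1 / 2) τ
/-- theta -/
noncomputable def Tm (τ v : ℂ) : ℂ := jacobiTheta₂ (v + τ / 2 + 1 / 2) τ
/-- denominators -/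
noncomputable def de (τ : ℂ) (n : ℤ) : ℂ := 1 + ee (2 * τ * (n + 1 / 4))
/-- Appell sum -/
noncomputable def Sm (τ v : ℂ) : ℂ := ∑' n : ℤ, ft τ n v / de τ n

lemma ft_ee (τ : ℂ) (n : ℤ) (v : ℂ) : ft τ n v = ee (2 * n * (v + τ / 2 + 1 / 2) + n ^ 2 * τ) := by
  rw [ft, jacobiTheta₂_term, ee]; congr 1; ring

lemma ft_add_one (τ : ℂ) (n : ℤ) (v : ℂ) : ft τ n (v + 1) = ft τ n v := by
  rw [ft_ee, ft_ee, show 2 * (n:ℂ) * (v + 1 + τ / 2 + 1 / 2) + n ^ 2 * τ = 2 * n * (v + τ / 2 + 1 / 2) + n ^ 2 * τ + 2 * n by ring,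
    ee_add, ee_two_int, mul_one]

lemma ft_add_tau (τ : ℂ) (n : ℤ) (v : ℂ) : ft τ n (v + τ) = ft τ n v * ee (2 * n * τ) := by
  rw [ft_ee, ft_ee, ← ee_add]; congr 1; ring

lemma ft_summable {τ : ℂ} (hτ : 0 < τ.im) (v : ℂ) : Summable fun n => ft τ n v :=
  (hasSum_jacobiTheta₂_term _ hτ).summable

lemma ft_tsum {τ : ℂ} (v : ℂ) : ∑' n, ft τ n v = Tm τ v := rfl

lemma ee_norm (x : ℂ) : ‖ee x‖ = Real.exp (-(Real.pi * x.im)) := by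
  rw [ee, norm_exp]; congr 1; simp

lemma de_bound {τ : ℂ} (hτ : 0 < τ.im) : ∃ δ > 0, ∀ n : ℤ, δ ≤ ‖de τ n‖ := by
  have hpi := Real.pi_pos
  have hps := mul_pos hpi hτ
  refine ⟨min (1 - Real.exp (-(Real.pi * τ.im / 2))) (Real.exp (3 * (Real.pi * τ.im) / 2) - 1), ?_, ?_⟩
  · refine lt_min ?_ ?_
    · have : Real.exp (-(Real.pi * τ.im / 2)) < 1 := by rw [Real.exp_lt_one_iff]; linarith
      linarith
    · have : 1 < Real.exp (3 * (Real.pi * τ.im) / 2) := by rw [Real.one_lt_exp_iff]; linarith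
      linarith
  · intro n
    have hn : ‖ee (2 * τ * (n + 1 / 4))‖ = Real.exp (-(2 * (Real.pi * τ.im) * (n + 1 / 4))) := by
      rw [ee_norm]; congr 1
      have : (2 * τ * ((n:ℂ) + 1 / 4)) = ((2 * ((n:ℝ) + 1 / 4) : ℝ) : ℂ) * τ := by push_cast; ring
      rw [this, im_ofReal_mul]; ring
    rcases le_or_gt 0 n with h | h
    · refine (min_le_left _ _).trans ?_
      have := norm_sub_le_norm_add (1:ℂ) (ee (2 * τ * (n + 1 / 4)))
      rw [hn, norm_one] at this
      refine le_trans ?_ this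
      have h' : (0:ℝ) ≤ n := by exact_mod_cast h
      have : Real.exp (-(2 * (Real.pi * τ.im) * (n + 1 / 4))) ≤ Real.exp (-(Real.pi * τ.im / 2)) := by
        rw [Real.exp_le_exp]; nlinarith
      linarith
    · refine (min_le_right _ _).trans ?_
      have := norm_sub_le_norm_add (ee (2 * τ * (n + 1 / 4))) (1:ℂ)
      rw [hn, norm_one, add_comm (ee _)] at this
      refine le_trans ?_ this
      have h' : (n:ℝ) ≤ -1 := by exact_mod_cast (by omega : n ≤ -1)
      have : Real.exp (3 * (Real.pi * τ.im) / 2) ≤ Real.exp (-(2 * (Real.pi * τ.im) * (n + 1 / 4))) := by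
        rw [Real.exp_le_exp]; nlinarith
      linarith

lemma de_ne {τ : ℂ} (hτ : 0 < τ.im) (n : ℤ) : de τ n ≠ 0 := by
  obtain ⟨δ, h0, h⟩ := de_bound hτ
  intro e
  have := h n
  rw [e, norm_zero] at this; linarith

lemma Sm_summable {τ : ℂ} (hτ : 0 < τ.im) (v : ℂ) : Summable fun n => ft τ n v / de τ n := by
  obtain ⟨δ, h0, h⟩ := de_bound hτ
  refine Summable.of_norm_bounded ((ft_summable hτ v).norm.mul_left δ⁻¹) ?_
  intro n
  rw [norm_div, div_eq_inv_mul]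
  gcongr
  exact h n

lemma Sm_add_one (τ v : ℂ) : Sm τ (v + 1) = Sm τ v := by
  rw [Sm, Sm]; simp_rw [ft_add_one]

lemma Sm_add_tau {τ : ℂ} (hτ : 0 < τ.im) (v : ℂ) : Sm τ v + ee (τ / 2) * Sm τ (v + τ) = Tm τ v := by
  rw [Sm, Sm, ← tsum_mul_left, ← (Sm_summable hτ v).tsum_add ((Sm_summable hτ (v + τ)).mul_left _), ← ft_tsum]
  refine tsum_congr fun n => ?_
  have hd := de_ne hτ n
  rw [ft_add_tau]
  field_simp
  rw [de, show 2 * τ * ((n:ℂ) + 1 / 4) = τ / 2 + 2 * n * τ by ring, ee_add]; ring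

lemma Tm_add_one (τ v : ℂ) : Tm τ (v + 1) = Tm τ v := by
  rw [Tm, Tm, show v + 1 + τ / 2 + 1 / 2 = v + τ / 2 + 1 / 2 + 1 by ring, jacobiTheta₂_add_left]

lemma Tm_add_tau (τ v : ℂ) : Tm τ (v + τ) = -ee (-(2 * v) - 2 * τ) * Tm τ v := by
  rw [Tm, Tm, show v + τ + τ / 2 + 1 / 2 = v + τ / 2 + 1 / 2 + τ by ring, jacobiTheta₂_add_left']
  congr 1
  have h := ee_add_one (-(2 * v) - 2 * τ - 1)
  rw [sub_add_cancel] at h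
  rw [h, neg_neg, ee]
  congr 1; ring

lemma Tm_diff {τ : ℂ} (hτ : 0 < τ.im) : Differentiable ℂ (Tm τ) := by
  intro v
  have h1 : DifferentiableAt ℂ (fun v : ℂ => v + τ / 2 + 1 / 2) v := by fun_prop
  exact (differentiableAt_jacobiTheta₂_fst (v + τ / 2 + 1 / 2) hτ).comp v h1

lemma Sm_diff {τ : ℂ} (hτ : 0 < τ.im) : Differentiable ℂ (Sm τ) := by
  intro v0
  obtain ⟨δ, h0, h⟩ := de_bound hτ
  let R : ℝ := |(v0 + τ / 2 + 1 / 2).im| + 1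
  let U : Set ℂ := {v | |(v + τ / 2 + 1 / 2).im| < R}
  have hU : IsOpen U := isOpen_lt (by fun_prop) continuous_const
  have hd : DifferentiableOn ℂ (Sm τ) U := by
    refine differentiableOn_tsum_of_summable_norm (u := fun n : ℤ => δ⁻¹ * Real.exp (-Real.pi * (τ.im * n ^ 2 - 2 * R * |n|))) ?_ ?_ hU ?_
    · have := summable_pow_mul_jacobiTheta₂_term_bound R hτ 0
      simp only [pow_zero, one_mul] at this
      exact this.mul_left _
    · intro n
      refine Differentiable.differentiableOn ?_
      simp_rw [ft_ee]
      unfold ee; fun_prop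
    · intro n v hv
      rw [norm_div, div_eq_inv_mul]
      gcongr
      · exact h n
      · have := norm_jacobiTheta₂_term_le hτ (le_of_lt hv) (le_refl τ.im) n
        exact this
  exact (hd v0 (by simp only [U, Set.mem_ofPred_eq, R]; linarith)).differentiableAt (hU.mem_nhds (by simp only [U, Set.mem_ofPred_eq, R]; linarith))


lemma im_half_pos {w : ℂ} (hw : 0 < w.im) : 0 < (w ^ (1 / 2 : ℂ)).im := by
  have h1 : 0 < (w ^ (1 / 2 : ℂ)).re := half_re_pos (by rw [mem_slitPlane_iff]; right; exact hw.ne')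
  have h2 := congrArg Complex.im (sq_half w)
  rw [pow_two, mul_im] at h2
  by_contra h
  push Not at h
  nlinarith

lemma half_sector {w : ℂ} (hw : 0 < w.re) : |(w ^ (1 / 2 : ℂ)).im| < (w ^ (1 / 2 : ℂ)).re := by
  have h1 : 0 < (w ^ (1 / 2 : ℂ)).re := half_re_pos (by rw [mem_slitPlane_iff]; left; exact hw)
  have h2 := congrArg Complex.re (sq_half w)
  rw [pow_two, mul_re] at h2
  refine abs_lt_of_sq_lt_sq ?_ h1.le
  nlinarith

lemma half_ratio {a b d : ℂ} (ha : 0 < a.re) (hb : 0 < b.re) (hd : 0 < d.im) (h : d * b = a) :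
    d ^ (1 / 2 : ℂ) * b ^ (1 / 2 : ℂ) = a ^ (1 / 2 : ℂ) := by
  have hb0 : b ^ (1 / 2 : ℂ) ≠ 0 := by
    intro e
    have := half_sector hb
    rw [e] at this; simp at this
  have e : a ^ (1 / 2 : ℂ) / b ^ (1 / 2 : ℂ) = d ^ (1 / 2 : ℂ) := by
    refine eq_of_sq_re ?_ ?_ (half_re_pos (by rw [mem_slitPlane_iff]; right; exact hd.ne'))
    · have hbne : b ≠ 0 := by rintro rfl; simp at hb
      rw [div_pow, sq_half, sq_half, sq_half, ← h, mul_div_cancel_right₀ _ hbne]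
    · rw [div_re, ← add_div]
      refine div_nonneg ?_ (normSq_nonneg _)
      have h1 := abs_lt.1 (half_sector ha)
      have h2 := abs_lt.1 (half_sector hb)
      nlinarith
  rw [← e, div_mul_cancel₀ _ hb0]

lemma tau_facts {τ : ℂ} (hτ : 0 < τ.im) : (2 * τ + 1) ≠ 0 ∧ 0 < (2 * τ + 1).im ∧ 0 < (τ / (2 * τ + 1)).im ∧ τ ≠ 0 := by
  have h1 : 0 < (2 * τ + 1).im := by simp; exact hτ
  have h2 : (2 * τ + 1) ≠ 0 := by intro e; rw [e] at h1; simp at h1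
  refine ⟨h2, h1, ?_, by rintro rfl; simp at hτ⟩
  rw [div_im, ← sub_div]
  refine div_pos ?_ (normSq_pos.2 h2)
  simp; nlinarith

lemma Tm_transform {τ : ℂ} (hτ : 0 < τ.im) (v : ℂ) :
    Tm (τ / (2 * τ + 1)) (v / (2 * τ + 1)) = -I * (2 * τ + 1) ^ (1 / 2 : ℂ) *
      ee (2 * v ^ 2 / (2 * τ + 1) + 2 * v * τ / (2 * τ + 1) + τ ^ 2 / (2 * τ + 1) / 2) * Tm τ v := by
  obtain ⟨hd, hdi, hti, ht0⟩ := tau_facts hτ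
  have hA : 0 < (-I * τ).re := by simpa using hτ
  have hB : 0 < (-I * (τ / (2 * τ + 1))).re := by simpa using hti
  have hr := half_ratio hA hB hdi (by field_simp)
  have hA0 : (-I * τ) ^ (1 / 2 : ℂ) ≠ 0 := by
    intro e; have := half_sector hA; rw [e] at this; simp at this
  have hB0 : (-I * (τ / (2 * τ + 1))) ^ (1 / 2 : ℂ) ≠ 0 := by
    intro e; have := half_sector hB; rw [e] at this; simp at this
  rw [Tm, Tm, jacobiTheta₂_functional_equation, jacobiTheta₂_functional_equation (v + τ / 2 + 1 / 2) τ]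
  have e1 : (v / (2 * τ + 1) + τ / (2 * τ + 1) / 2 + 1 / 2) / (τ / (2 * τ + 1)) = (v + τ / 2 + 1 / 2) / τ + 1 := by
    field_simp; ring
  have e2 : -1 / τ = -1 / (τ / (2 * τ + 1)) + 2 := by
    field_simp; ring
  rw [e1, jacobiTheta₂_add_left, e2, jacobiTheta₂_add_right]
  have e3 : cexp (-Real.pi * I * (v / (2 * τ + 1) + τ / (2 * τ + 1) / 2 + 1 / 2) ^ 2 / (τ / (2 * τ + 1))) =
    -I * ee (2 * v ^ 2 / (2 * τ + 1) + 2 * v * τ / (2 * τ + 1) + τ ^ 2 / (2 * τ + 1) / 2) *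
      cexp (-Real.pi * I * (v + τ / 2 + 1 / 2) ^ 2 / τ) := by
    have : -I = ee (-(1/2)) := by rw [ee_neg, ee_half, inv_I]
    rw [this, ← ee_add, ee, ← exp_add]
    congr 1
    field_simp
    ring
  have hh0 : (2 * τ + 1) ^ (1 / 2 : ℂ) ≠ 0 := by
    intro e; rw [e, zero_mul] at hr; exact hA0 hr.symm
  rw [e3, ← hr]
  generalize (-I * (τ / (2 * τ + 1))) ^ (1 / 2 : ℂ) = B at *
  generalize (2 * τ + 1) ^ (1 / 2 : ℂ) = H at *
  generalize jacobiTheta₂ _ _ = J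
  generalize cexp _ = K
  generalize ee _ = L
  field_simp


lemma half_ne {w : ℂ} (hw : 0 < w.im) : w ^ (1 / 2 : ℂ) ≠ 0 := by
  intro e
  have := im_half_pos hw
  rw [e] at this; simp at this

lemma sqrt2_ne : ((Real.sqrt 2 : ℝ) : ℂ) ≠ 0 := by
  have : Real.sqrt 2 ≠ 0 := by positivity
  exact_mod_cast this

lemma sqrt2_sq : ((Real.sqrt 2 : ℝ) : ℂ) ^ 2 = 2 := by
  rw [← ofReal_pow, Real.sq_sqrt (by norm_num)]; norm_num

lemma ee_quarter : ((Real.sqrt 2 : ℝ) : ℂ) * ee (1 / 4) = 1 + I := by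
  have : ee (1 / 4) = ((Real.sqrt 2 : ℝ) / 2 : ℂ) * (1 + I) := by
    rw [ee, show (Real.pi * I * (1 / 4) : ℂ) = ((Real.pi / 4 : ℝ) : ℂ) * I by push_cast; ring, exp_mul_I, ← ofReal_cos, ← ofReal_sin,
      Real.cos_pi_div_four, Real.sin_pi_div_four]
    push_cast; ring
  rw [this]
  linear_combination (1 + I) / 2 * sqrt2_sq

lemma kappa {τ : ℂ} (hτ : 0 < τ.im) : (1 / (-I * (τ + 1 / 2))) ^ (1 / 2 : ℂ) =
    (Real.sqrt 2 : ℝ) * ee (1 / 4) / (2 * τ + 1) ^ (1 / 2 : ℂ) := by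
  obtain ⟨hd, hdi, hti, ht0⟩ := tau_facts hτ
  have h1 : 0 < ((2 * τ + 1) ^ (1 / 2 : ℂ)).im := im_half_pos hdi
  have h2 : 0 < ((2 * τ + 1) ^ (1 / 2 : ℂ)).re := half_re_pos (by rw [mem_slitPlane_iff]; right; exact hdi.ne')
  have hs : τ + 1 / 2 ≠ 0 := by
    intro e; apply hd; linear_combination 2 * e
  rw [ee_quarter]
  symm
  refine eq_of_sq_re ?_ ?_ ?_
  · rw [div_pow, sq_half, sq_half]
    have : (2 * τ + 1) = 2 * (τ + 1 / 2) := by ring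
    rw [this]
    generalize τ + 1 / 2 = s at *
    have hI := I_ne_zero
    rw [div_eq_div_iff (by simpa using hs) (by simp [hs])]
    linear_combination (-s * (I + 2)) * I_sq
  · rw [div_re, ← add_div]
    refine div_nonneg ?_ (normSq_nonneg _)
    simp; nlinarith
  · apply half_re_pos
    rw [mem_slitPlane_iff]; left
    rw [one_div, inv_re]
    refine div_pos (by simpa using hτ) (normSq_pos.2 (mul_ne_zero (neg_ne_zero.2 I_ne_zero) hs))

/-- combination -/
noncomputable def II (σ w : ℂ) : ℂ := ee (1 / 16) * I0 σ (w + 1 / 8) - ee (5 / 16) * I0 σ (w + 5 / 8)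

/-- the error function -/
noncomputable def Yy (τ v : ℂ) : ℂ :=
  ee (9 * τ / 16 - 11 / 32 + 3 / 2 * (v - τ / 2)) / (Real.sqrt 2 : ℝ) * II (τ + 1 / 2) (v - τ / 2)

lemma Yy_diff {τ : ℂ} (hτ : 0 < τ.im) : Differentiable ℂ (Yy τ) := by
  have h := I0_diff (σ := τ + 1 / 2) (by simpa using hτ)
  have h1 : Differentiable ℂ fun v => I0 (τ + 1 / 2) (v - τ / 2 + 1 / 8) := h.comp (by fun_prop)
  have h5 : Differentiable ℂ fun v => I0 (τ + 1 / 2) (v - τ / 2 + 5 / 8) := h.comp (by fun_prop)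
  have h2 : Differentiable ℂ fun v => ee (9 * τ / 16 - 11 / 32 + 3 / 2 * (v - τ / 2)) := ee_diff.comp (by fun_prop)
  exact (h2.div_const _).mul ((h1.const_mul _).sub (h5.const_mul _))

lemma I0_E1' {τ : ℂ} (hτ : 0 < τ.im) (w : ℂ) : I0 (τ + 1 / 2) w + I * I0 (τ + 1 / 2) (w + 1) =
    (Real.sqrt 2 : ℝ) * ee (1 / 4) / (2 * τ + 1) ^ (1 / 2 : ℂ) * ee (2 * w ^ 2 / (2 * τ + 1)) := by
  obtain ⟨hd, hdi, hti, ht0⟩ := tau_facts hτ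
  have hs : τ + 1 / 2 ≠ 0 := by
    intro e; apply hd; linear_combination 2 * e
  rw [I0_E1 (by simpa using hτ), kappa hτ]
  congr 1
  rw [ee]; congr 1
  have : (2 * τ + 1) = 2 * (τ + 1 / 2) := by ring
  rw [this]
  generalize τ + 1 / 2 = s at *
  field_simp

lemma I0_E2' {σ : ℂ} (hσ : 0 < σ.im) (w : ℂ) :
    I0 σ (w + σ) = ee (2 * w + σ) * I0 σ w - I * ee (-(σ / 16) + (w + σ) / 2) := by
  have := I0_E2 hσ (w + σ)
  rw [add_sub_cancel_right] at this
  have e1 : exp (2 * Real.pi * I * (w + σ) - Real.pi * I * σ) = ee (2 * w + σ) := by rw [ee]; congr 1; ring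
  have e2 : exp (-(Real.pi * I * σ / 16) + Real.pi * I * (w + σ) / 2) = ee (-(σ / 16) + (w + σ) / 2) := by rw [ee]; congr 1; ring
  rw [e1, e2] at this
  linear_combination this

lemma Yy_add_one {τ : ℂ} (hτ : 0 < τ.im) (v : ℂ) : Yy τ (v + 1) - Yy τ v =
    -(ee (2 * (v + τ / 4) ^ 2 / (2 * τ + 1)) * (ee (4 * v / (2 * τ + 1) - 3 * τ / (2 * τ + 1)) +
      ee (2 * v / (2 * τ + 1) - τ / (2 * τ + 1) / 2)) / (2 * τ + 1) ^ (1 / 2 : ℂ)) := by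
  obtain ⟨hd, hdi, hti, ht0⟩ := tau_facts hτ
  have hh := half_ne hdi
  have h1 := I0_E1' hτ (v - τ / 2 + 1 / 8)
  have h5 := I0_E1' hτ (v - τ / 2 + 5 / 8)
  rw [Yy, Yy, II, II, show v + 1 - τ / 2 + 1 / 8 = v - τ / 2 + 1 / 8 + 1 by ring,
    show v + 1 - τ / 2 + 5 / 8 = v - τ / 2 + 5 / 8 + 1 by ring]
  have e0 : ee (9 * τ / 16 - 11 / 32 + 3 / 2 * (v + 1 - τ / 2)) = -I * ee (9 * τ / 16 - 11 / 32 + 3 / 2 * (v - τ / 2)) := by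
    rw [← ee_half, neg_mul, ← ee_add, ← ee_add_one]; congr 1; ring
  have e1 : ee (2 * (v + τ / 4) ^ 2 / (2 * τ + 1)) * ee (2 * v / (2 * τ + 1) - τ / (2 * τ + 1) / 2) =
      ee (9 * τ / 16 - 11 / 32 + 3 / 2 * (v - τ / 2)) * ee (1 / 16) * ee (1 / 4) * ee (2 * (v - τ / 2 + 1 / 8) ^ 2 / (2 * τ + 1)) := by
    simp only [← ee_add]; congr 1; field_simp; ring
  have e5 : ee (2 * (v + τ / 4) ^ 2 / (2 * τ + 1)) * ee (4 * v / (2 * τ + 1) - 3 * τ / (2 * τ + 1)) =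
      - (ee (9 * τ / 16 - 11 / 32 + 3 / 2 * (v - τ / 2)) * ee (5 / 16) * ee (1 / 4) * ee (2 * (v - τ / 2 + 5 / 8) ^ 2 / (2 * τ + 1))) := by
    simp only [← ee_add]; rw [← ee_add_two, ← ee_add_one]; congr 1; field_simp; ring
  rw [e0, mul_add, e1, e5]
  have hs := sqrt2_ne
  generalize ee (9 * τ / 16 - 11 / 32 + 3 / 2 * (v - τ / 2)) = Y0 at *
  generalize I0 (τ + 1 / 2) (v - τ / 2 + 1 / 8 + 1) = a1 at *
  generalize I0 (τ + 1 / 2) (v - τ / 2 + 5 / 8 + 1) = a5 at *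
  generalize I0 (τ + 1 / 2) (v - τ / 2 + 1 / 8) = b1 at *
  generalize I0 (τ + 1 / 2) (v - τ / 2 + 5 / 8) = b5 at *
  have k1 : b1 = Real.sqrt 2 * ee (1 / 4) / (2 * τ + 1) ^ (1 / 2 : ℂ) * ee (2 * (v - τ / 2 + 1 / 8) ^ 2 / (2 * τ + 1)) - I * a1 := by
    linear_combination h1
  have k5 : b5 = Real.sqrt 2 * ee (1 / 4) / (2 * τ + 1) ^ (1 / 2 : ℂ) * ee (2 * (v - τ / 2 + 5 / 8) ^ 2 / (2 * τ + 1)) - I * a5 := by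
    linear_combination h5
  rw [k1, k5]
  field_simp
  ring

lemma Yy_add_tau {τ : ℂ} (hτ : 0 < τ.im) (v : ℂ) : Yy τ v - ee (τ / 2 - 2 * v - 2 * τ) * Yy τ (v + τ) =
    1 - ee (2 * (v + τ / 4) ^ 2 / (2 * τ + 1)) / (2 * τ + 1) ^ (1 / 2 : ℂ) := by
  obtain ⟨hd, hdi, hti, ht0⟩ := tau_facts hτ
  have hh := half_ne hdi
  have hσ : 0 < (τ + 1 / 2).im := by simpa using hτ
  have h3 := I0_E1' hτ (v - τ / 2 - 3 / 8)
  rw [show v - τ / 2 - 3 / 8 + 1 = v - τ / 2 + 5 / 8 by ring] at h3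
  have s1 := I0_E2' hσ (v - τ / 2 - 3 / 8)
  have s5 := I0_E2' hσ (v - τ / 2 + 1 / 8)
  rw [Yy, Yy, II, II, show v + τ - τ / 2 + 1 / 8 = v - τ / 2 - 3 / 8 + (τ + 1 / 2) by ring,
    show v + τ - τ / 2 + 5 / 8 = v - τ / 2 + 1 / 8 + (τ + 1 / 2) by ring, s1, s5]
  have hs := sqrt2_ne
  have k3 : I0 (τ + 1 / 2) (v - τ / 2 - 3 / 8) = Real.sqrt 2 * ee (1 / 4) / (2 * τ + 1) ^ (1 / 2 : ℂ) *
      ee (2 * (v - τ / 2 - 3 / 8) ^ 2 / (2 * τ + 1)) - I * I0 (τ + 1 / 2) (v - τ / 2 + 5 / 8) := by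
    linear_combination h3
  rw [k3]
  set Y0 := ee (9 * τ / 16 - 11 / 32 + 3 / 2 * (v - τ / 2)) with hY0
  have m0 : ee (τ / 2 - 2 * v - 2 * τ) * ee (9 * τ / 16 - 11 / 32 + 3 / 2 * (v + τ - τ / 2)) = Y0 * ee (-(2 * v)) := by
    rw [hY0]; simp only [← ee_add]; congr 1; ring
  have m1 : ee (-(2 * v)) * ee (1 / 16) * ee (2 * (v - τ / 2 - 3 / 8) + (τ + 1 / 2)) = ee (-(3/16)) := by
    simp only [← ee_add]; congr 1; ring
  have m1' : I * ee (-(3/16)) = ee (5 / 16) := by rw [← ee_add_half]; congr 1; norm_num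
  have m5 : ee (-(2 * v)) * ee (5 / 16) * ee (2 * (v - τ / 2 + 1 / 8) + (τ + 1 / 2)) = - ee (1 / 16) := by
    rw [← ee_add_one]; simp only [← ee_add]; congr 1; ring
  have m3 : Y0 * ee (-(3/16)) * ee (1 / 4) * ee (2 * (v - τ / 2 - 3 / 8) ^ 2 / (2 * τ + 1)) = ee (2 * (v + τ / 4) ^ 2 / (2 * τ + 1)) := by
    have hx : (2 * τ + 1) * (2 * τ + 1)⁻¹ = 1 := mul_inv_cancel₀ hd
    rw [hY0]; simp only [← ee_add]; congr 1
    simp only [div_eq_mul_inv _ (2 * τ + 1)]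
    generalize (2 * τ + 1)⁻¹ = i at *
    linear_combination (3 * τ / 16 + 9 / 32 - 3 * v / 2) * hx
  have n1 : ee (-(2 * v)) * ee (1 / 16) * ee (-((τ + 1 / 2) / 16) + (v - τ / 2 - 3 / 8 + (τ + 1 / 2)) / 2) =
     ee (1/4) * (ee (-(2 * v)) * ee (-(1 / 8) - 1 / 4) * ee (-((τ + 1 / 2) / 16) + (v - τ / 2 + (τ + 1 / 2)) / 2)) := by
    simp only [← ee_add]; congr 1; ring
  have n5 : ee (-(2 * v)) * ee (5 / 16) * ee (-((τ + 1 / 2) / 16) + (v - τ / 2 + 1 / 8 + (τ + 1 / 2)) / 2) =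
     I * (ee (1/4) * (ee (-(2 * v)) * ee (-(1 / 8) - 1 / 4) * ee (-((τ + 1 / 2) / 16) + (v - τ / 2 + (τ + 1 / 2)) / 2))) := by
    rw [← ee_half]; simp only [← ee_add]; congr 1; ring
  have n0 : Y0 * (ee (-(2 * v)) * ee (-(1 / 8) - 1 / 4) * ee (-((τ + 1 / 2) / 16) + (v - τ / 2 + (τ + 1 / 2)) / 2)) = -I := by
    have : -I = ee (-(1/2)) := by rw [ee_neg, ee_half, inv_I]
    rw [this, hY0]; simp only [← ee_add]; congr 1; ring
  obtain ⟨r, hrdef⟩ : ∃ r, r = ((Real.sqrt 2 : ℝ) : ℂ)⁻¹ := ⟨_, rfl⟩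
  have hr : r * ((Real.sqrt 2 : ℝ) : ℂ) = 1 := by rw [hrdef]; exact inv_mul_cancel₀ hs
  have hq2 : ee (1 / 4) * r * (1 - I) = 1 := by
    linear_combination r ^ 2 * (1 - I) * ee_quarter - r * (1 - I) * ee (1/4) * hr + (r * (Real.sqrt 2 : ℝ) + 1) * hr - r ^ 2 * sqrt2_sq - r ^ 2 * I_sq
  rw [div_eq_mul_inv _ ((Real.sqrt 2 : ℝ) : ℂ), div_eq_mul_inv _ ((Real.sqrt 2 : ℝ) : ℂ), ← hrdef]
  generalize ((Real.sqrt 2 : ℝ) : ℂ) = s2 at *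
  generalize ee (9 * τ / 16 - 11 / 32 + 3 / 2 * (v + τ - τ / 2)) = a0 at *
  generalize ee (τ / 2 - 2 * v - 2 * τ) = a1 at *
  generalize ee (-((τ + 1 / 2) / 16) + (v - τ / 2 + (τ + 1 / 2)) / 2) = a2 at *
  generalize ee (-((τ + 1 / 2) / 16) + (v - τ / 2 + 1 / 8 + (τ + 1 / 2)) / 2) = Q5 at *
  generalize ee (-((τ + 1 / 2) / 16) + (v - τ / 2 - 3 / 8 + (τ + 1 / 2)) / 2) = Q1 at *
  generalize ee (2 * (v - τ / 2 - 3 / 8) ^ 2 / (2 * τ + 1)) = X at *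
  generalize ee (2 * (v + τ / 4) ^ 2 / (2 * τ + 1)) = E at *
  generalize ee (2 * (v - τ / 2 - 3 / 8) + (τ + 1 / 2)) = P1 at *
  generalize ee (2 * (v - τ / 2 + 1 / 8) + (τ + 1 / 2)) = P5 at *
  generalize I0 (τ + 1 / 2) (v - τ / 2 + 5 / 8) = b5 at *
  generalize I0 (τ + 1 / 2) (v - τ / 2 + 1 / 8) = b1 at *
  generalize (2 * τ + 1) ^ (1 / 2 : ℂ) = h at *
  generalize ee (-(2 * v)) = a3 at *
  generalize ee (-(1 / 8) - 1 / 4) = a4 at *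
  generalize ee (1 / 4) = q at *
  generalize ee (1 / 16) = z1 at *
  generalize ee (5 / 16) = z5 at *
  generalize ee (-(3 / 16)) = z3 at *
  clear_value Y0
  linear_combination (-r * (z1 * (P1 * (s2 * q / h * X - I * b5) - I * Q1) - z5 * (P5 * b1 - I * Q5))) * m0
    - Y0 * r * (s2 * q / h * X - I * b5) * m1 + Y0 * r * b1 * m5 + Y0 * r * I * n1 - Y0 * r * I * n5
    + Y0 * r * b5 * m1' - 1 / h * m3 - Y0 * z3 * q / h * X * hr + q * r * (I + 1) * n0 + hq2
    + (-(Y0 * a3 * a4 * a2) * q * r - q * r) * I_sq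


lemma liouville_zero {τ : ℂ} (hτ : 0 < τ.im) {f : ℂ → ℂ} (hf : Differentiable ℂ f) (h1 : ∀ v, f (v + 1) = f v)
    (h2 : ∀ v, f v + ee (τ / 2) * f (v + τ) = 0) (v : ℂ) : f v = 0 := by
  let g : ℂ → ℂ := fun v => f v * ee (v / 2)
  have hg : Differentiable ℂ g := hf.mul (ee_diff.comp (by fun_prop))
  have g1 : ∀ v, g (v + 1) = I * g v := by
    intro v; simp only [g]; rw [h1, add_div, ee_add_half]; ring
  have g2 : ∀ v, g (v + τ) = - g v := by
    intro v; simp only [g]; rw [add_div, ee_add]; linear_combination ee (v / 2) * h2 v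
  have n1 : ∀ v, ‖g (v + 1)‖ = ‖g v‖ := by intro v; rw [g1, norm_mul, norm_I, one_mul]
  have n2 : ∀ v, ‖g (v + τ)‖ = ‖g v‖ := by intro v; rw [g2, norm_neg]
  have p1 : Function.Periodic (fun v => ‖g v‖) 1 := n1
  have p2 : Function.Periodic (fun v => ‖g v‖) τ := n2
  have hK : IsCompact ((fun p : ℝ × ℝ => (p.1 : ℂ) + p.2 * τ) '' (Set.Icc 0 1 ×ˢ Set.Icc 0 1)) :=
    (isCompact_Icc.prod isCompact_Icc).image (by fun_prop)
  obtain ⟨C, hC⟩ := (hK.image hg.continuous).isBounded.exists_norm_le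
  have hb : ∀ v, ‖g v‖ ≤ C := by
    intro v
    let y : ℝ := v.im / τ.im
    let x : ℝ := v.re - y * τ.re
    have hv : v = x + y * τ := by
      apply Complex.ext
      · simp [x]
      · simp [y]; field_simp
    have e1 := p1.sub_zsmul_eq (x := v - (⌊y⌋ : ℤ) • τ) ⌊x⌋
    have e2 := p2.sub_zsmul_eq (x := v) ⌊y⌋
    rw [← e2, ← e1]
    apply hC
    refine ⟨_, ⟨(x - ⌊x⌋, y - ⌊y⌋), ?_, ?_⟩, rfl⟩
    · have a := Int.fract_nonneg x
      have b := Int.fract_lt_one x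
      have c := Int.fract_nonneg y
      have d := Int.fract_lt_one y
      simp only [Int.fract] at a b c d
      exact ⟨⟨a, b.le⟩, ⟨c, d.le⟩⟩
    · simp only [zsmul_eq_mul, mul_one]; push_cast; linear_combination -hv
  have hbd : Bornology.IsBounded (Set.range g) := by
    rw [isBounded_iff_forall_norm_le]
    exact ⟨C, by rintro _ ⟨w, rfl⟩; exact hb w⟩
  have hc := hg.apply_eq_apply_of_bounded hbd (v + 1) v
  rw [g1] at hc
  have hz : g v = 0 := by
    have hne : I - 1 ≠ 0 := by
      intro e; have := congrArg Complex.im e; simp at this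
    have : (I - 1) * g v = 0 := by linear_combination hc
    exact (mul_eq_zero.1 this).resolve_left hne
  exact (mul_eq_zero.1 hz).resolve_right (ee_ne _)

/-- the second Appell sum -/
noncomputable def Bd (τ v : ℂ) : ℂ := I / (2 * τ + 1) * ee (-(3 * τ * (τ / (2 * τ + 1)) / 8) - τ / (2 * τ + 1) * v) *
  Sm (τ / (2 * τ + 1)) (v / (2 * τ + 1))

lemma BT {τ : ℂ} (hτ : 0 < τ.im) (v : ℂ) : I / (2 * τ + 1) * ee (-(3 * τ * (τ / (2 * τ + 1)) / 8) - τ / (2 * τ + 1) * v) *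
    Tm (τ / (2 * τ + 1)) (v / (2 * τ + 1)) = ee (2 * (v + τ / 4) ^ 2 / (2 * τ + 1)) / (2 * τ + 1) ^ (1 / 2 : ℂ) * Tm τ v := by
  obtain ⟨hd, hdi, hti, ht0⟩ := tau_facts hτ
  have hh := half_ne hdi
  have e : ee (2 * (v + τ / 4) ^ 2 / (2 * τ + 1)) = ee (-(3 * τ * (τ / (2 * τ + 1)) / 8) - τ / (2 * τ + 1) * v) *
      ee (2 * v ^ 2 / (2 * τ + 1) + 2 * v * τ / (2 * τ + 1) + τ ^ 2 / (2 * τ + 1) / 2) := by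
    rw [← ee_add]; congr 1; field_simp; ring
  rw [Tm_transform hτ, e]
  have h2 := sq_half (2 * τ + 1)
  generalize ee (-(3 * τ * (τ / (2 * τ + 1)) / 8) - τ / (2 * τ + 1) * v) = A
  generalize ee _ = B
  generalize Tm τ v = T
  generalize (2 * τ + 1) ^ (1 / 2 : ℂ) = h at *
  rw [← h2]
  field_simp
  linear_combination (-(A * B * T)) * I_sq

lemma Bd_add_tau {τ : ℂ} (hτ : 0 < τ.im) (v : ℂ) : Bd τ v + ee (τ / 2) * Bd τ (v + τ) =
    ee (2 * (v + τ / 4) ^ 2 / (2 * τ + 1)) / (2 * τ + 1) ^ (1 / 2 : ℂ) * Tm τ v := by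
  obtain ⟨hd, hdi, hti, ht0⟩ := tau_facts hτ
  rw [← BT hτ, Bd, Bd, add_div v τ, ← Sm_add_tau hti]
  have e : ee (τ / 2) * ee (-(3 * τ * (τ / (2 * τ + 1)) / 8) - τ / (2 * τ + 1) * (v + τ)) =
      ee (-(3 * τ * (τ / (2 * τ + 1)) / 8) - τ / (2 * τ + 1) * v) * ee (τ / (2 * τ + 1) / 2) := by
    have hx : (2 * τ + 1) * (2 * τ + 1)⁻¹ = 1 := mul_inv_cancel₀ hd
    rw [← ee_add, ← ee_add]; congr 1
    simp only [div_eq_mul_inv _ (2 * τ + 1)]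
    generalize (2 * τ + 1)⁻¹ = i at *
    linear_combination (-(τ / 2)) * hx
  linear_combination (I / (2 * τ + 1) * Sm (τ / (2 * τ + 1)) (v / (2 * τ + 1) + τ / (2 * τ + 1))) * e

lemma Sm_sub_two {τ : ℂ} (hτ : 0 < τ.im) (v : ℂ) :
    Sm τ (v - 2 * τ) = Tm τ v * (ee (4 * v - 2 * τ) + ee (2 * v + τ / 2)) + ee τ * Sm τ v := by
  have s1 := Sm_add_tau hτ (v - 2 * τ)
  have s2 := Sm_add_tau hτ (v - τ)
  have t1 := Tm_add_tau τ (v - 2 * τ)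
  have t2 := Tm_add_tau τ (v - τ)
  rw [show v - 2 * τ + τ = v - τ by ring] at s1 t1
  rw [sub_add_cancel] at s2 t2
  have u1 : ee (2 * v - 2 * τ) * ee (-(2 * (v - 2 * τ)) - 2 * τ) = 1 := by
    rw [← ee_add, ← ee_zero]; congr 1; ring
  have u2 : ee (2 * v) * ee (-(2 * (v - τ)) - 2 * τ) = 1 := by
    rw [← ee_add, ← ee_zero]; congr 1; ring
  have w1 : Tm τ (v - τ) = - ee (2 * v) * Tm τ v := by
    linear_combination -(Tm τ (v - τ)) * u2 + ee (2 * v) * t2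
  have w2 : Tm τ (v - 2 * τ) = ee (4 * v - 2 * τ) * Tm τ v := by
    have : ee (4 * v - 2 * τ) = ee (2 * v - 2 * τ) * ee (2 * v) := by rw [← ee_add]; congr 1; ring
    rw [this]
    linear_combination -(Tm τ (v - 2 * τ)) * u1 + ee (2 * v - 2 * τ) * t1 - ee (2 * v - 2 * τ) * w1
  have x1 : ee (2 * v + τ / 2) = ee (2 * v) * ee (τ / 2) := ee_add _ _
  have x2 : ee τ = ee (τ / 2) * ee (τ / 2) := by rw [← ee_add]; congr 1; ring
  rw [x1, x2]
  linear_combination s1 - ee (τ / 2) * s2 + w2 - ee (τ / 2) * w1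

lemma Bd_add_one {τ : ℂ} (hτ : 0 < τ.im) (v : ℂ) : Bd τ (v + 1) - Bd τ v =
    (ee (2 * (v + τ / 4) ^ 2 / (2 * τ + 1)) * (ee (4 * v / (2 * τ + 1) - 3 * τ / (2 * τ + 1)) +
      ee (2 * v / (2 * τ + 1) - τ / (2 * τ + 1) / 2)) / (2 * τ + 1) ^ (1 / 2 : ℂ)) * Tm τ v := by
  obtain ⟨hd, hdi, hti, ht0⟩ := tau_facts hτ
  have key := BT hτ v
  have hs := Sm_sub_two hti (v / (2 * τ + 1))
  have harg : (v + 1) / (2 * τ + 1) = v / (2 * τ + 1) - 2 * (τ / (2 * τ + 1)) + 1 := by field_simp; ring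
  rw [Bd, Bd, harg, Sm_add_one, hs]
  set t := τ / (2 * τ + 1) with ht
  have e0 : ee (-(3 * τ * t / 8) - t * (v + 1)) = ee (-(3 * τ * t / 8) - t * v) * ee (-t) := by
    rw [← ee_add]; congr 1; ring
  have e1 : ee (-t) * ee t = 1 := by rw [← ee_add, ← ee_zero]; congr 1; ring
  have e4 : ee (4 * v / (2 * τ + 1) - 3 * τ / (2 * τ + 1)) = ee (-t) * ee (4 * (v / (2 * τ + 1)) - 2 * t) := by
    rw [← ee_add]; congr 1; rw [ht]; ring
  have e2 : ee (2 * v / (2 * τ + 1) - t / 2) = ee (-t) * ee (2 * (v / (2 * τ + 1)) + t / 2) := by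
    rw [← ee_add]; congr 1; ring
  rw [e0, e4, e2]
  linear_combination (I / (2 * τ + 1) * ee (-(3 * τ * t / 8) - t * v) * Sm t (v / (2 * τ + 1))) * e1 +
    ee (-t) * (ee (4 * (v / (2 * τ + 1)) - 2 * t) + ee (2 * (v / (2 * τ + 1)) + t / 2)) * key

lemma Bd_diff {τ : ℂ} (hτ : 0 < τ.im) : Differentiable ℂ (Bd τ) := by
  obtain ⟨hd, hdi, hti, ht0⟩ := tau_facts hτ
  have h1 : Differentiable ℂ fun v => ee (-(3 * τ * (τ / (2 * τ + 1)) / 8) - τ / (2 * τ + 1) * v) := ee_diff.comp (by fun_prop)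
  have h2 : Differentiable ℂ fun v => Sm (τ / (2 * τ + 1)) (v / (2 * τ + 1)) := (Sm_diff hti).comp (by fun_prop)
  exact (h1.const_mul _).mul h2

lemma key_identity {τ : ℂ} (hτ : 0 < τ.im) (v : ℂ) : Sm τ v - Bd τ v = Tm τ v * Yy τ v := by
  have h := liouville_zero hτ (f := fun v => Sm τ v - Bd τ v - Tm τ v * Yy τ v)
    (((Sm_diff hτ).sub (Bd_diff hτ)).sub ((Tm_diff hτ).mul (Yy_diff hτ)))
    (by
      intro v
      have h1 := Bd_add_one hτ v
      have h2 := Yy_add_one hτ v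
      simp only [Sm_add_one, Tm_add_one]
      linear_combination -h1 - Tm τ v * h2)
    (by
      intro v
      have h0 := Sm_add_tau hτ v
      have h1 := Bd_add_tau hτ v
      have h2 := Yy_add_tau hτ v
      have h3 := Tm_add_tau τ v
      have h4 : ee (τ / 2 - 2 * v - 2 * τ) = ee (τ / 2) * ee (-(2 * v) - 2 * τ) := by
        rw [← ee_add]; congr 1; ring
      rw [h4] at h2
      simp only [h3]
      linear_combination h0 - h1 - Tm τ v * h2) v
  linear_combination h


lemma ee_int (n : ℤ) : ee n = (-1 : ℂ) ^ n := by
  rw [ee, mul_comm, exp_int_mul, exp_pi_mul_I]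

lemma neg_one_natAbs (n : ℤ) : (-1 : ℂ) ^ n.natAbs = (-1 : ℂ) ^ n := by
  rcases Int.natAbs_eq n with h | h
  · conv_rhs => rw [h]
    rw [zpow_natCast]
  · conv_rhs => rw [h]
    rw [zpow_neg, zpow_natCast, ← inv_pow]; norm_num

lemma Tm_half_ne {τ : ℂ} (hτ : 0 < τ.im) : Tm τ (τ / 2) ≠ 0 := by
  have hp : ‖ee τ‖ < 1 := by
    rw [ee_norm, Real.exp_lt_one_iff]
    have := mul_pos Real.pi_pos hτ; linarith
  have h := theta4_ne hp (ee_ne τ)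
  have e : Tm τ (τ / 2) = -ee (-τ) * ∑' n : ℤ, (-1 : ℂ) ^ n.natAbs * ee τ ^ (n.natAbs ^ 2) := by
    rw [← ft_tsum, ← (Equiv.subRight (1 : ℤ)).tsum_eq, ← tsum_mul_left]
    refine tsum_congr fun n => ?_
    have e2 : ee τ ^ (n.natAbs ^ 2) = ee (n ^ 2 * τ) := by
      rw [ee, ee, ← exp_nat_mul]; congr 1
      have : ((n.natAbs ^ 2 : ℕ) : ℂ) = (n : ℂ) ^ 2 := by
        have h2 : ((n.natAbs ^ 2 : ℕ) : ℤ) = n ^ 2 := by rw [Nat.cast_pow]; exact Int.natAbs_sq n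
        have h3 : (((n.natAbs ^ 2 : ℕ) : ℤ) : ℂ) = ((n ^ 2 : ℤ) : ℂ) := by rw [h2]
        rw [Int.cast_natCast, Int.cast_pow] at h3
        exact h3
      rw [this]; ring
    rw [Equiv.subRight_apply, ft_ee, neg_one_natAbs, ← ee_int, e2, ← ee_add_one]
    rw [← ee_add, ← ee_add, ← ee_add_two]
    congr 1
    push_cast; ring
  rw [e]
  exact mul_ne_zero (neg_ne_zero.2 (ee_ne _)) h

lemma theta_eq (τ v : ℂ) : jacobiThetaZw v τ = ee (v + 1 / 2 + τ / 4) * Tm τ v := by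
  rw [jacobiThetaZw, ← ft_tsum, ← tsum_mul_left]
  refine tsum_congr fun n => ?_
  rw [ft_ee, ← ee_add, ee, ← exp_add]; congr 1; ring

lemma V11_eq {τ : ℂ} (hτ : 0 < τ.im) : V11 τ = -ee (-(9 * τ / 16)) * (Sm τ (τ / 2) / Tm τ (τ / 2)) := by
  have hT := Tm_half_ne hτ
  rw [V11, muZw, theta_eq]
  have hS : ∑' n : ℤ, (-1 : ℂ) ^ n * exp (2 * Real.pi * I * n * (τ / 2)) * exp (Real.pi * I * τ * n * (n + 1)) /
      (1 - exp (2 * Real.pi * I * (τ / 4 + 1 / 2)) * exp (2 * Real.pi * I * n * τ)) = Sm τ (τ / 2) := by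
    rw [Sm]
    refine tsum_congr fun n => ?_
    congr 1
    · rw [← ee_int, ft_ee, ee, ee, ← exp_add, ← exp_add]; congr 1; ring
    · rw [de, sub_eq_add_neg]; congr 1
      have : exp (2 * Real.pi * I * (τ / 4 + 1 / 2)) * exp (2 * Real.pi * I * n * τ) = ee (2 * τ * (n + 1 / 4) + 1) := by
        rw [ee, ← exp_add]; congr 1; ring
      rw [this, ee_add_one, neg_neg]
  have e : exp (-Real.pi * I * τ / 16) * exp (Real.pi * I * (τ / 4 + 1 / 2)) = ee (-(9 * τ / 16)) * ee (τ / 2 + 1 / 2 + τ / 4) := by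
    rw [← ee_add, ee, ← exp_add]; congr 1; ring
  have hn := ee_ne (τ / 2 + 1 / 2 + τ / 4)
  rw [hS]
  clear hS
  generalize exp (-Real.pi * I * τ / 16) = a at *
  generalize exp (Real.pi * I * (τ / 4 + 1 / 2)) = b at *
  generalize ee (τ / 2 + 1 / 2 + τ / 4) = c at *
  generalize ee (-(9 * τ / 16)) = d at *
  generalize Tm τ (τ / 2) = T at *
  generalize Sm τ (τ / 2) = S at *
  have e3 : b / (c * T) = b * c⁻¹ * T⁻¹ := by rw [div_eq_mul_inv, mul_inv]; ring
  have e4 : c * c⁻¹ = 1 := mul_inv_cancel₀ hn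
  rw [e3, div_eq_mul_inv]
  linear_combination (-S * T⁻¹ * c⁻¹) * e - d * S * T⁻¹ * e4

lemma rr_eq (σ : ℂ) (y : ℝ) : exp (Real.pi * I * σ * y ^ 2) * rr y =
    ee (1 / 16) * (gq σ (0 + 1 / 8) y / Dn y) - ee (5 / 16) * (gq σ (0 + 5 / 8) y / Dn y) := by
  have hD := Dn_ne y
  have h8 : 1 + I * ((Real.exp (Real.pi * y / 4) : ℝ) : ℂ) ^ 8 = Dn y := by
    rw [Dn, ofReal_exp, ← exp_nat_mul]; congr 3; push_cast; ring
  have g1 : gq σ (0 + 1 / 8) y = exp (Real.pi * I * σ * y ^ 2) * ((Real.exp (Real.pi * y / 4) : ℝ) : ℂ) := by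
    rw [gq, ofReal_exp, ← exp_add]; congr 1; push_cast; ring
  have g5 : gq σ (0 + 5 / 8) y = exp (Real.pi * I * σ * y ^ 2) * ((Real.exp (Real.pi * y / 4) : ℝ) : ℂ) ^ 5 := by
    rw [gq, ofReal_exp, ← exp_nat_mul, ← exp_add]; congr 1; push_cast; ring
  have z1 : exp (Real.pi * I / 16) = ee (1 / 16) := by rw [ee]; congr 1; ring
  have z5 : ee (5 / 16) = ee (1 / 16) * exp (Real.pi * I / 4) := by rw [ee, ee, ← exp_add]; congr 1; ring
  rw [rr, h8, g1, g5, z1, z5]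
  field_simp

lemma II_eq {σ : ℂ} (hσ : 0 < σ.im) : MeasureTheory.Integrable (fun y : ℝ => exp (Real.pi * I * σ * y ^ 2) * rr y) ∧
    ∫ y : ℝ, exp (Real.pi * I * σ * y ^ 2) * rr y = II σ 0 := by
  have h1 := (div_Dn_integrable (gq_integrable hσ (0 + 1 / 8))).const_mul (ee (1 / 16))
  have h5 := (div_Dn_integrable (gq_integrable hσ (0 + 5 / 8))).const_mul (ee (5 / 16))
  simp_rw [rr_eq]
  refine ⟨h1.sub h5, ?_⟩
  rw [MeasureTheory.integral_sub h1 h5, MeasureTheory.integral_const_mul, MeasureTheory.integral_const_mul]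
  rfl

lemma II_sym {σ : ℂ} (hσ : 0 < σ.im) : ∫ y : ℝ, exp (Real.pi * I * σ * y ^ 2) * (rr y + rr (-y)) = 2 * II σ 0 := by
  obtain ⟨h, he⟩ := II_eq hσ
  have hn := h.comp_neg
  have s := MeasureTheory.integral_neg_eq_self (fun y : ℝ => exp (Real.pi * I * σ * y ^ 2) * rr y) MeasureTheory.volume
  simp only [ofReal_neg, neg_sq] at hn s
  simp_rw [mul_add]
  rw [MeasureTheory.integral_add h hn, s, he]; ring

lemma LHS_eq {τ : ℂ} (hτ : 0 < τ.im) : V11 τ - (2 * τ + 1) ^ (-(1 / 2 : ℂ)) * V11 (τ / (2 * τ + 1)) =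
    -(ee (-(11 / 32)) / (Real.sqrt 2 : ℝ) * II (τ + 1 / 2) 0) := by
  obtain ⟨hd, hdi, hti, ht0⟩ := tau_facts hτ
  have hh := half_ne hdi
  have key := key_identity hτ (τ / 2)
  have bt := BT hτ (τ / 2)
  have hT := Tm_half_ne hτ
  have hT2 := Tm_half_ne hti
  have hv : τ / (2 * τ + 1) / 2 = τ / 2 / (2 * τ + 1) := by ring
  rw [V11_eq hτ, V11_eq hti, cpow_neg]
  rw [hv] at hT2 ⊢
  have hY : Yy τ (τ / 2) = ee (9 * τ / 16) * (ee (-(11 / 32)) / (Real.sqrt 2 : ℝ) * II (τ + 1 / 2) 0) := by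
    rw [Yy, sub_self, show 9 * τ / 16 - 11 / 32 + 3 / 2 * 0 = 9 * τ / 16 + -(11 / 32) by ring, ee_add]; ring
  have e1 : ee (-(9 * τ / 16)) * ee (9 * τ / 16) = 1 := by rw [← ee_add, ← ee_zero]; congr 1; ring
  have e2 : ee (-(9 * (τ / (2 * τ + 1)) / 16)) = ee (-(9 * τ / 16)) * ee (2 * (τ / 2 + τ / 4) ^ 2 / (2 * τ + 1)) := by
    have hx : (2 * τ + 1) * (2 * τ + 1)⁻¹ = 1 := mul_inv_cancel₀ hd
    rw [← ee_add]; congr 1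
    simp only [div_eq_mul_inv _ (2 * τ + 1)]
    generalize (2 * τ + 1)⁻¹ = i at *
    linear_combination (-(9 * τ / 16)) * hx
  rw [Bd, hY] at key
  rw [e2]
  generalize ee (-(11 / 32)) / (Real.sqrt 2 : ℝ) * II (τ + 1 / 2) 0 = Z at *
  generalize I / (2 * τ + 1) * ee (-(3 * τ * (τ / (2 * τ + 1)) / 8) - τ / (2 * τ + 1) * (τ / 2)) = P at *
  generalize Tm (τ / (2 * τ + 1)) (τ / 2 / (2 * τ + 1)) = T2 at *
  generalize Sm (τ / (2 * τ + 1)) (τ / 2 / (2 * τ + 1)) = S2 at *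
  generalize Tm τ (τ / 2) = T at *
  generalize Sm τ (τ / 2) = S at *
  generalize ee (2 * (τ / 2 + τ / 4) ^ 2 / (2 * τ + 1)) = E at *
  generalize (2 * τ + 1) ^ (1 / 2 : ℂ) = h at *
  generalize ee (-(9 * τ / 16)) = u at *
  generalize ee (9 * τ / 16) = u2 at *
  have k1 : S = P * S2 + T * (u2 * Z) := by linear_combination key
  have k2 : P = E / h * T / T2 := by rw [eq_div_iff hT2]; exact bt
  rw [k1, k2]
  field_simp
  linear_combination (-(Z * h * T2)) * e1

lemma RHS_eq {τ : ℂ} (hτ : 0 < τ.im) : -(I/8) * (I * ∫ t in Set.Ioi (0 : ℝ),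
          E1fun ((1/2 + I * t) / 32) / ((-I * (1/2 + I * t + τ)) ^ ((1 : ℂ)/2))) =
    -(ee (-(11 / 32)) / (Real.sqrt 2 : ℝ) * II (τ + 1 / 2) 0) := by
  have hσ : 0 < (τ + 1 / 2).im := by simpa using hτ
  have e : ∀ t : ℝ, E1fun ((1/2 + I * t) / 32) / ((-I * (1/2 + I * t + τ)) ^ ((1 : ℂ)/2)) =
      Th t / ((t - I * (τ + 1 / 2)) ^ (1 / 2 : ℂ)) := by
    intro t
    rw [E1fun, Th, show 8 * ((1 / 2 + I * (t:ℂ)) / 32) = (1 / 2 + I * t) / 4 by ring,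
      show -I * (1 / 2 + I * (t:ℂ) + τ) = t - I * (τ + 1 / 2) by linear_combination (-(t:ℂ)) * I_sq]
  simp_rw [e]
  rw [Th_fubini hσ, II_sym hσ]
  have hs := sqrt2_ne
  have hs2 := sqrt2_sq
  have e11 : exp (-(11 * Real.pi * I / 32)) = ee (-(11 / 32)) := by rw [ee]; congr 1; ring
  rw [e11]
  generalize ee _ = A
  generalize II _ _ = B
  generalize ((Real.sqrt 2 : ℝ) : ℂ) = s at *
  field_simp
  linear_combination (2 * A * B) * I_sq + A * B * hs2

theorem V11_quantum_transform :
    ∀ τ : ℂ, 0 < τ.im →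
      V11 τ - (2 * τ + 1) ^ (-(1/2 : ℂ)) * V11 (τ / (2 * τ + 1)) =
        -(I/8) * (I * ∫ t in Set.Ioi (0 : ℝ),
          E1fun ((1/2 + I * t) / 32) / ((-I * (1/2 + I * t + τ)) ^ ((1 : ℂ)/2))) := by
  intro τ hτ
  rw [LHS_eq hτ, RHS_eq hτ]
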